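/- arXiv:2312.08681 — 6 statements merged into one kernel-verified Lean document; each statement's English description precedes it below -/
import Mathlib

section
/- Let m ≥ 3. The triangle Artin group Art_{2,3,2m} = ⟨a,b,c | ac=ca, bcb=cbc, (ab)^m=(ba)^m⟩ is isomorphic to the group B = ⟨b,c,x,y,α,δ | α = xc, α = bx, y = bc, yb = cy, δb = cδ, δ = α x^{m-2} α⟩; an isomorphism φ: Art_{2,3,2m} → B is given by φ(a) = b^{-1}c^{-1}xc, φ(b) = b, φ(c) = c, with inverse ψ given by ψ(b)=b, ψ(c)=c, ψ(x)=c(ba)c^{-1}, ψ(y)=bc, ψ(α)=bc(ba)c^{-1}, ψ(δ)=bc(ba)^m. -/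
/-!
Put `x = c(ba)c⁻¹`, so that `ba = c⁻¹xc` and `(ba)^k = c⁻¹x^kc` for every `k`. Given the braid
relation `bcb = cbc`, which in `B` is what `y = bc` and `yb = cy` say, the commutation `ac = ca` is
equivalent to `xc = bx`, whose common value is `α`. Moreover
`δ = αx^{m-2}α = bx·x^{m-2}·xc = bx^mc = bc(ba)^m`, so `δb = cδ` reads
`bc(ba)^m b = cbc(ba)^m = bcb(ba)^m`: it says that `b` commutes with `(ba)^m`,
which is `(ab)^m = (ba)^m`, as `(ab)^m = b⁻¹(ba)^m b`. Hence each presentation's relations hold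
in the other group, and `φ`, `ψ` are mutually inverse on generators.
-/

/-- Generators of `Art_{2,3,2m}`: `0 ↦ a`, `1 ↦ b`, `2 ↦ c`. -/
def Art232m.a : FreeGroup (Fin 3) := FreeGroup.of 0
def Art232m.b : FreeGroup (Fin 3) := FreeGroup.of 1
def Art232m.c : FreeGroup (Fin 3) := FreeGroup.of 2

/-- Relators of `Art_{2,3,2m} = ⟨a,b,c | ac=ca, bcb=cbc, (ab)^m=(ba)^m⟩`. -/
def Art232m.rels (m : ℕ) : Set (FreeGroup (Fin 3)) :=
  { Art232m.a * Art232m.c * (Art232m.c * Art232m.a)⁻¹,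
    Art232m.b * Art232m.c * Art232m.b * (Art232m.c * Art232m.b * Art232m.c)⁻¹,
    (Art232m.a * Art232m.b) ^ m * ((Art232m.b * Art232m.a) ^ m)⁻¹ }

/-- The triangle Artin group `Art_{2,3,2m}`. -/
abbrev Art232m (m : ℕ) : Type := PresentedGroup (Art232m.rels m)

/-- Generators of `B`: `0 ↦ b`, `1 ↦ c`, `2 ↦ x`, `3 ↦ y`, `4 ↦ α`, `5 ↦ δ`. -/
def BGrp.b : FreeGroup (Fin 6) := FreeGroup.of 0
def BGrp.c : FreeGroup (Fin 6) := FreeGroup.of 1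
def BGrp.x : FreeGroup (Fin 6) := FreeGroup.of 2
def BGrp.y : FreeGroup (Fin 6) := FreeGroup.of 3
def BGrp.α : FreeGroup (Fin 6) := FreeGroup.of 4
def BGrp.δ : FreeGroup (Fin 6) := FreeGroup.of 5

/-- Relators of
`B = ⟨b,c,x,y,α,δ | α = xc, α = bx, y = bc, yb = cy, δb = cδ, δ = α x^{m-2} α⟩`. -/
def BGrp.rels (m : ℕ) : Set (FreeGroup (Fin 6)) :=
  { BGrp.α * (BGrp.x * BGrp.c)⁻¹,
    BGrp.α * (BGrp.b * BGrp.x)⁻¹,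
    BGrp.y * (BGrp.b * BGrp.c)⁻¹,
    BGrp.y * BGrp.b * (BGrp.c * BGrp.y)⁻¹,
    BGrp.δ * BGrp.b * (BGrp.c * BGrp.δ)⁻¹,
    BGrp.δ * (BGrp.α * BGrp.x ^ (m - 2) * BGrp.α)⁻¹ }

/-- The group `B`. -/
abbrev BGrp (m : ℕ) : Type := PresentedGroup (BGrp.rels m)

/-- The generators of `Art_{2,3,2m}` as elements of the presented group. -/
def aA (m : ℕ) : Art232m m := PresentedGroup.of 0
def bA (m : ℕ) : Art232m m := PresentedGroup.of 1
def cA (m : ℕ) : Art232m m := PresentedGroup.of 2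

/-- The generators of `B` as elements of the presented group. -/
def bB (m : ℕ) : BGrp m := PresentedGroup.of 0
def cB (m : ℕ) : BGrp m := PresentedGroup.of 1
def xB (m : ℕ) : BGrp m := PresentedGroup.of 2
def yB (m : ℕ) : BGrp m := PresentedGroup.of 3
def αB (m : ℕ) : BGrp m := PresentedGroup.of 4
def δB (m : ℕ) : BGrp m := PresentedGroup.of 5

section Relations

variable {G : Type*} [Group G]

lemma mul_pow_conj (a b : G) (m : ℕ) : b * (a * b) ^ m = (b * a) ^ m * b := by
  have h : SemiconjBy b (a * b) (b * a) := by
    simp only [SemiconjBy, mul_assoc]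
  exact h.pow_right m

/-- The relation `(ab)^m = (ba)^m` says that `b` commutes with `(ba)^m`. -/
lemma mul_pow_comm_iff (a b : G) (m : ℕ) :
    (a * b) ^ m = (b * a) ^ m ↔ (b * a) ^ m * b = b * (b * a) ^ m := by
  rw [← mul_pow_conj, mul_right_inj]

/-- The conjugate `x = c(ba)c⁻¹` satisfies `bx = xc` in the Artin group. -/
lemma conj_semiconj {a b c : G} (h₁ : a * c = c * a) (h₂ : b * c * b = c * b * c) :
    b * c * (b * a) * c⁻¹ = c * (b * a) * c⁻¹ * c := by
  rw [mul_inv_eq_iff_eq_mul]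
  calc b * c * (b * a) = b * c * b * a := by group
    _ = c * b * (c * a) := by rw [h₂]; group
    _ = c * (b * a) * c⁻¹ * c * c := by rw [← h₁]; group

/-- The element `δ = αx^{m-2}α` equals `bc(ba)^m`, where `α = bx = xc`, `x = c(ba)c⁻¹` and
`m = n + 2`. -/
lemma delta_eq {b c x α t : G} (hxc : α = x * c) (hbx : α = b * x) (ht : x = c * t * c⁻¹)
    (n : ℕ) : α * x ^ n * α = b * c * t ^ (n + 2) := by
  calc α * x ^ n * α = b * x * x ^ n * (x * c) := by rw [← hbx, ← hxc]
    _ = b * x ^ (n + 2) * c := by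
      rw [pow_succ, pow_succ']; group
    _ = b * c * t ^ (n + 2) := by
      rw [ht, conj_pow]; group

/-- Under the braid relation, `δb = cδ` for `δ = bct` says that `b` commutes with `t`. -/
lemma delta_semiconj_iff {b c t : G} (h : b * c * b = c * b * c) :
    b * c * t * b = c * (b * c * t) ↔ t * b = b * t := by
  have h' : c * (b * c * t) = b * c * (b * t) := by
    calc c * (b * c * t) = c * b * c * t := by group
      _ = b * c * (b * t) := by rw [← h]; group
  rw [h', mul_assoc (b * c), mul_right_inj]

/-- Converse of `conj_semiconj`: the element `a = b⁻¹c⁻¹xc` commutes with `c` once `bx = xc`. -/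
lemma commute_of_semiconj {b c x : G} (hx : x * c = b * x) (h : b * c * b = c * b * c) :
    b⁻¹ * c⁻¹ * x * c * c = c * (b⁻¹ * c⁻¹ * x * c) := by
  have h' : b⁻¹ * c⁻¹ * b = c * b⁻¹ * c⁻¹ := by
    have h'' : c⁻¹ * b * (c * b) = b * c := by
      calc c⁻¹ * b * (c * b) = c⁻¹ * (b * c * b) := by group
        _ = b * c := by rw [h]; group
    calc b⁻¹ * c⁻¹ * b = b⁻¹ * (c⁻¹ * b * (c * b)) * b⁻¹ * c⁻¹ := by group
      _ = c * b⁻¹ * c⁻¹ := by rw [h'']; group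
  calc b⁻¹ * c⁻¹ * x * c * c = b⁻¹ * c⁻¹ * (x * c) * c := by group
    _ = b⁻¹ * c⁻¹ * b * x * c := by rw [hx]; group
    _ = c * (b⁻¹ * c⁻¹ * x * c) := by rw [h']; group

end Relations

lemma artA_rels (m : ℕ) :
    aA m * cA m = cA m * aA m ∧
    bA m * cA m * bA m = cA m * bA m * cA m ∧
    (aA m * bA m) ^ m = (bA m * aA m) ^ m := by
  refine ⟨?_, ?_, ?_⟩
  · exact PresentedGroup.mk_eq_mk_of_mul_inv_mem (rels := Art232m.rels m)
      (x := Art232m.a * Art232m.c) (y := Art232m.c * Art232m.a) (by simp [Art232m.rels])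
  · exact PresentedGroup.mk_eq_mk_of_mul_inv_mem (rels := Art232m.rels m)
      (x := Art232m.b * Art232m.c * Art232m.b) (y := Art232m.c * Art232m.b * Art232m.c)
      (by simp [Art232m.rels])
  · exact PresentedGroup.mk_eq_mk_of_mul_inv_mem (rels := Art232m.rels m)
      (x := (Art232m.a * Art232m.b) ^ m) (y := (Art232m.b * Art232m.a) ^ m)
      (by simp [Art232m.rels])

lemma bB_rels (m : ℕ) :
    αB m = xB m * cB m ∧ αB m = bB m * xB m ∧ yB m = bB m * cB m ∧
    yB m * bB m = cB m * yB m ∧ δB m * bB m = cB m * δB m ∧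
    δB m = αB m * xB m ^ (m - 2) * αB m := by
  have key : ∀ u v : FreeGroup (Fin 6), u * v⁻¹ ∈ BGrp.rels m →
      PresentedGroup.mk (BGrp.rels m) u = PresentedGroup.mk (BGrp.rels m) v :=
    fun _ _ h => PresentedGroup.mk_eq_mk_of_mul_inv_mem h
  refine ⟨?_, ?_, ?_, ?_, ?_, ?_⟩
  · exact key BGrp.α (BGrp.x * BGrp.c) (by simp [BGrp.rels])
  · exact key BGrp.α (BGrp.b * BGrp.x) (by simp [BGrp.rels])
  · exact key BGrp.y (BGrp.b * BGrp.c) (by simp [BGrp.rels])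
  · exact key (BGrp.y * BGrp.b) (BGrp.c * BGrp.y) (by simp [BGrp.rels])
  · exact key (BGrp.δ * BGrp.b) (BGrp.c * BGrp.δ) (by simp [BGrp.rels])
  · exact key BGrp.δ (BGrp.α * BGrp.x ^ (m - 2) * BGrp.α) (by simp [BGrp.rels])

lemma bB_braid (m : ℕ) : bB m * cB m * bB m = cB m * bB m * cB m := by
  obtain ⟨-, -, h₃, h₄, -, -⟩ := bB_rels m
  rw [mul_assoc (cB m), ← h₃, h₄]

lemma xB_eq (m : ℕ) :
    xB m = cB m * (bB m * ((bB m)⁻¹ * (cB m)⁻¹ * xB m * cB m)) * (cB m)⁻¹ := by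
  group

lemma δB_eq (m : ℕ) (hm : 3 ≤ m) :
    δB m = bB m * cB m * (bB m * ((bB m)⁻¹ * (cB m)⁻¹ * xB m * cB m)) ^ m := by
  obtain ⟨h₁, h₂, -, -, -, h₆⟩ := bB_rels m
  have h := delta_eq h₁ h₂ (xB_eq m) (m - 2)
  rwa [← h₆, Nat.sub_add_cancel (by omega)] at h

/-- The images of the generators `a, b, c` under `φ`. -/
def phiGen (m : ℕ) : Fin 3 → BGrp m :=
  ![(bB m)⁻¹ * (cB m)⁻¹ * xB m * cB m, bB m, cB m]

/-- The images of the generators `b, c, x, y, α, δ` under `ψ`. -/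
def psiGen (m : ℕ) : Fin 6 → Art232m m :=
  ![bA m, cA m, cA m * (bA m * aA m) * (cA m)⁻¹, bA m * cA m,
    bA m * cA m * (bA m * aA m) * (cA m)⁻¹, bA m * cA m * (bA m * aA m) ^ m]

lemma phiGen_rels (m : ℕ) (hm : 3 ≤ m) :
    ∀ r ∈ Art232m.rels m, FreeGroup.lift (phiGen m) r = 1 := by
  obtain ⟨h₁, h₂, -, -, h₅, -⟩ := bB_rels m
  have hbr := bB_braid m
  rintro r (rfl | rfl | rfl) <;>
    simp only [Art232m.a, Art232m.b, Art232m.c, map_mul, map_inv, map_pow,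
      FreeGroup.lift_apply_of, mul_inv_eq_one]
  · exact commute_of_semiconj (h₁.symm.trans h₂) hbr
  · exact hbr
  · refine (mul_pow_comm_iff _ _ _).2 ((delta_semiconj_iff hbr).1 ?_)
    rw [δB_eq m hm] at h₅
    exact h₅

lemma psiGen_rels (m : ℕ) (hm : 3 ≤ m) :
    ∀ r ∈ BGrp.rels m, FreeGroup.lift (psiGen m) r = 1 := by
  obtain ⟨h₁, h₂, h₃⟩ := artA_rels m
  have hxc := conj_semiconj h₁ h₂
  have hbx : bA m * cA m * (bA m * aA m) * (cA m)⁻¹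
      = bA m * (cA m * (bA m * aA m) * (cA m)⁻¹) := by group
  rintro r (rfl | rfl | rfl | rfl | rfl | rfl) <;>
    simp only [BGrp.b, BGrp.c, BGrp.x, BGrp.y, BGrp.α, BGrp.δ, map_mul, map_inv, map_pow,
      FreeGroup.lift_apply_of, mul_inv_eq_one]
  · exact hxc
  · exact hbx
  · rfl
  · exact h₂.trans (mul_assoc _ _ _)
  · exact (delta_semiconj_iff h₂).2 ((mul_pow_comm_iff _ _ _).1 h₃)
  · have h := delta_eq hxc hbx rfl (m - 2)
    rw [Nat.sub_add_cancel (by omega)] at h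
    exact h.symm

/-- The homomorphism `φ : Art_{2,3,2m} → B`. -/
def phi (m : ℕ) (hm : 3 ≤ m) : Art232m m →* BGrp m :=
  PresentedGroup.toGroup (phiGen_rels m hm)

/-- The homomorphism `ψ : B → Art_{2,3,2m}`. -/
def psi (m : ℕ) (hm : 3 ≤ m) : BGrp m →* Art232m m :=
  PresentedGroup.toGroup (psiGen_rels m hm)

section Values

variable (m : ℕ) (hm : 3 ≤ m)

lemma phi_a : phi m hm (aA m) = (bB m)⁻¹ * (cB m)⁻¹ * xB m * cB m :=
  PresentedGroup.toGroup.of _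
lemma phi_b : phi m hm (bA m) = bB m := PresentedGroup.toGroup.of _
lemma phi_c : phi m hm (cA m) = cB m := PresentedGroup.toGroup.of _
lemma psi_b : psi m hm (bB m) = bA m := PresentedGroup.toGroup.of _
lemma psi_c : psi m hm (cB m) = cA m := PresentedGroup.toGroup.of _
lemma psi_x : psi m hm (xB m) = cA m * (bA m * aA m) * (cA m)⁻¹ :=
  PresentedGroup.toGroup.of _
lemma psi_y : psi m hm (yB m) = bA m * cA m := PresentedGroup.toGroup.of _
lemma psi_α : psi m hm (αB m) = bA m * cA m * (bA m * aA m) * (cA m)⁻¹ :=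
  PresentedGroup.toGroup.of _
lemma psi_δ : psi m hm (δB m) = bA m * cA m * (bA m * aA m) ^ m :=
  PresentedGroup.toGroup.of _

lemma psi_comp_phi : (psi m hm).comp (phi m hm) = MonoidHom.id _ := by
  ext i
  fin_cases i
  · change psi m hm (phi m hm (aA m)) = aA m
    simp only [phi_a, map_mul, map_inv, psi_b, psi_c, psi_x]
    group
  · change psi m hm (phi m hm (bA m)) = bA m
    rw [phi_b, psi_b]
  · change psi m hm (phi m hm (cA m)) = cA m
    rw [phi_c, psi_c]

lemma phi_comp_psi : (phi m hm).comp (psi m hm) = MonoidHom.id _ := by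
  obtain ⟨-, h₂, h₃, -, -, -⟩ := bB_rels m
  ext i
  fin_cases i
  · change phi m hm (psi m hm (bB m)) = bB m
    rw [psi_b, phi_b]
  · change phi m hm (psi m hm (cB m)) = cB m
    rw [psi_c, phi_c]
  · change phi m hm (psi m hm (xB m)) = xB m
    simp only [psi_x, map_mul, map_inv, phi_a, phi_b, phi_c]
    exact (xB_eq m).symm
  · change phi m hm (psi m hm (yB m)) = yB m
    rw [psi_y, map_mul, phi_b, phi_c, h₃]
  · change phi m hm (psi m hm (αB m)) = αB m
    simp only [psi_α, map_mul, map_inv, phi_a, phi_b, phi_c]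
    rw [h₂]
    group
  · change phi m hm (psi m hm (δB m)) = δB m
    simp only [psi_δ, map_mul, map_pow, phi_a, phi_b, phi_c]
    exact (δB_eq m hm).symm

end Values

/-- For `m ≥ 3` the triangle Artin group `Art_{2,3,2m}` is isomorphic
to `B`, via `φ(a) = b⁻¹c⁻¹xc`, `φ(b) = b`, `φ(c) = c`, with inverse `ψ` given by
`ψ(b) = b`, `ψ(c) = c`, `ψ(x) = c(ba)c⁻¹`, `ψ(y) = bc`, `ψ(α) = bc(ba)c⁻¹`,
`ψ(δ) = bc(ba)^m`. -/
theorem art232m_iso_B (m : ℕ) (hm : 3 ≤ m) :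
    ∃ e : Art232m m ≃* BGrp m,
      e (aA m) = (bB m)⁻¹ * (cB m)⁻¹ * xB m * cB m ∧
      e (bA m) = bB m ∧
      e (cA m) = cB m ∧
      e.symm (bB m) = bA m ∧
      e.symm (cB m) = cA m ∧
      e.symm (xB m) = cA m * (bA m * aA m) * (cA m)⁻¹ ∧
      e.symm (yB m) = bA m * cA m ∧
      e.symm (αB m) = bA m * cA m * (bA m * aA m) * (cA m)⁻¹ ∧
      e.symm (δB m) = bA m * cA m * (bA m * aA m) ^ m := by
  exact ⟨MonoidHom.toMulEquiv (phi m hm) (psi m hm) (psi_comp_phi m hm) (phi_comp_psi m hm),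
    phi_a m hm, phi_b m hm, phi_c m hm, psi_b m hm, psi_c m hm, psi_x m hm, psi_y m hm,
    psi_α m hm, psi_δ m hm⟩
end

section
/- Let m ≥ 3. There exist a free group A of rank 3, a free group B of rank 4, a free group C of rank 7, and injective group homomorphisms i: C → A and j: C → B with j(C) of index 2 in B, such that the triangle Artin group Art_{2,3,2m} = ⟨a,b,c | ac=ca, bcb=cbc, (ab)^m=(ba)^m⟩ is isomorphic to the amalgamated free product A *_C B (the pushout of i and j). -/
/-- `G`, together with the maps `ιA : A →* G` and `ιB : B →* G`, is the amalgamated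
free product `A *_C B` of `i : C →* A` and `j : C →* B`, i.e. the pushout of `i` and
`j` in the category of groups. -/
def IsAmalgamatedProduct {C A B G : Type} [Group C] [Group A] [Group B] [Group G]
    (i : C →* A) (j : C →* B) (ιA : A →* G) (ιB : B →* G) : Prop :=
  ιA.comp i = ιB.comp j ∧
  ∀ (K : Type) (_ : Group K) (f : A →* K) (g : B →* K),
    f.comp i = g.comp j → ∃! h : G →* K, h.comp ιA = f ∧ h.comp ιB = g


namespace Art232m

/-! ### Free groups detected by labelled permutations -/

/-- The permutation of `V × F` that moves the vertex by `σ` and multiplies the second coordinate on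
the left by the label `L v` of the edge `v → σ v`. -/
def labelPerm {V F : Type} [Group F] (σ : Equiv.Perm V) (L : V → F) : Equiv.Perm (V × F) where
  toFun x := (σ x.1, L x.1 * x.2)
  invFun x := (σ.symm x.1, (L (σ.symm x.1))⁻¹ * x.2)
  left_inv x := by simp
  right_inv x := by simp

lemma labelPerm_apply {V F : Type} [Group F] (σ : Equiv.Perm V) (L : V → F) (v : V) (g : F) :
    labelPerm σ L (v, g) = (σ v, L v * g) := rfl

lemma labelPerm_inv_apply {V F : Type} [Group F] (σ : Equiv.Perm V) (L : V → F) {u v : V} (g : F)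
    (h : σ u = v) : (labelPerm σ L)⁻¹ (v, g) = (u, (L u)⁻¹ * g) := by
  rw [Equiv.Perm.inv_eq_iff_eq, labelPerm_apply, h]
  simp

/-- If the image of each free generator fixes the vertex `v₀` and has that generator as its label
there, then the label at `v₀` recovers every element of the free group. -/
lemma injective_of_action {n : ℕ} {A V : Type} [Group A] (i : FreeGroup (Fin n) →* A)
    (Φ : A →* Equiv.Perm (V × FreeGroup (Fin n))) (v₀ : V)
    (h : ∀ k g, Φ (i (FreeGroup.of k)) (v₀, g) = (v₀, FreeGroup.of k * g)) :
    Function.Injective i := by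
  have key : ∀ e g, Φ (i e) (v₀, g) = (v₀, e * g) := by
    intro e
    induction e using FreeGroup.induction_on with
    | C1 => simp
    | of k => exact h k
    | inv_of k _ =>
      intro g
      rw [map_inv, map_inv, Equiv.Perm.inv_eq_iff_eq, h]
      simp
    | mul x y hx hy =>
      intro g
      rw [map_mul, map_mul, Equiv.Perm.mul_apply, hy, hx, mul_assoc]
  rw [injective_iff_map_eq_one]
  intro e he
  have := key e 1
  rw [he, map_one] at this
  simpa using this.symm

/-! ### The two embeddings -/

/-- The embedding of `F₇` into `F₃ = F(y, z, r)`: the generators go to `y³`, then to the words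
`y⁻¹zy, r, yry⁻¹`, then to the words `z, (y⁻¹zy³)^m, y²ry⁻²` to which `t` conjugates them. -/
def iHom (m : ℕ) : FreeGroup (Fin 7) →* FreeGroup (Fin 3) :=
  let y : FreeGroup (Fin 3) := FreeGroup.of 0
  let z : FreeGroup (Fin 3) := FreeGroup.of 1
  let r : FreeGroup (Fin 3) := FreeGroup.of 2
  FreeGroup.lift ![y ^ 3, y⁻¹ * z * y, r, y * r * y⁻¹,
    z, (y⁻¹ * z * y ^ 3) ^ m, y ^ 2 * r * (y ^ 2)⁻¹]

/-- The embedding of `F₇` into `F₄ = F(t, e₁, e₂, e₃)`, with image the kernel of the parity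
of `t`. -/
def jHom : FreeGroup (Fin 7) →* FreeGroup (Fin 4) :=
  let t : FreeGroup (Fin 4) := FreeGroup.of 0
  FreeGroup.lift ![t ^ 2, FreeGroup.of 1, FreeGroup.of 2, FreeGroup.of 3,
    t * FreeGroup.of 1 * t⁻¹, t * FreeGroup.of 2 * t⁻¹, t * FreeGroup.of 3 * t⁻¹]

lemma jHom_injective : Function.Injective jHom := by
  let E : Fin 7 → FreeGroup (Fin 7) := FreeGroup.of
  -- The base vertex is `false`; the two edges of `t` carry the labels `E 0` and `1`.
  let τ : Equiv.Perm (Bool × FreeGroup (Fin 7)) :=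
    labelPerm Equiv.boolNot (fun v => if v then 1 else E 0)
  let ε : Fin 7 → Fin 7 → Equiv.Perm (Bool × FreeGroup (Fin 7)) := fun k l =>
    labelPerm 1 (fun v => if v then E l else E k)
  let Φ : FreeGroup (Fin 4) →* Equiv.Perm (Bool × FreeGroup (Fin 7)) :=
    FreeGroup.lift ![τ, ε 1 4, ε 2 5, ε 3 6]
  have τf : ∀ g, τ (false, g) = (true, E 0 * g) := fun g => rfl
  have τt : ∀ g, τ (true, g) = (false, g) := fun g => by simp [τ, labelPerm_apply]
  have τi : ∀ g, τ.symm (false, g) = (true, g) := fun g => by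
    rw [Equiv.symm_apply_eq, τt]
  have εf : ∀ k l g, ε k l (false, g) = (false, E k * g) := fun k l g => rfl
  have εt : ∀ k l g, ε k l (true, g) = (true, E l * g) := fun k l g => rfl
  refine injective_of_action jHom Φ false ?_
  intro k g
  fin_cases k <;>
    simp [jHom, Φ, pow_succ, τf, τt, τi, εf, εt, E]

lemma jHom_index : jHom.range.index = 2 := by
  let t : FreeGroup (Fin 4) := FreeGroup.of 0
  let E : Fin 7 → FreeGroup (Fin 7) := FreeGroup.of
  -- Conjugation by `t` on the image of `jHom`.
  let α : FreeGroup (Fin 7) →* FreeGroup (Fin 7) :=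
    FreeGroup.lift ![E 0, E 4, E 5, E 6, E 0 * E 1 * (E 0)⁻¹, E 0 * E 2 * (E 0)⁻¹,
      E 0 * E 3 * (E 0)⁻¹]
  have hα : (MulAut.conj t).toMonoidHom.comp jHom = jHom.comp α := by
    ext k
    fin_cases k <;> simp [jHom, α, E, t, pow_succ, mul_assoc]
  have hconj : ∀ b ∈ jHom.range, t * b * t⁻¹ ∈ jHom.range := by
    rintro _ ⟨e, rfl⟩
    exact ⟨α e, (DFunLike.congr_fun hα e).symm⟩
  have htt : t * t ∈ jHom.range := ⟨E 0, by simp [jHom, E, t, pow_succ]⟩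
  let par : FreeGroup (Fin 4) →* Multiplicative (ZMod 2) :=
    FreeGroup.lift ![Multiplicative.ofAdd 1, 1, 1, 1]
  have h11 : (Multiplicative.ofAdd 1 : Multiplicative (ZMod 2)) ^ 2 = 1 := by decide
  have hpar : ∀ b ∈ jHom.range, par b = 1 := by
    have : par.comp jHom = 1 := by
      ext k
      fin_cases k <;> simp [jHom, par, h11]
    rintro _ ⟨e, rfl⟩
    exact DFunLike.congr_fun this e
  have hpart : par t = Multiplicative.ofAdd 1 := by simp [par, t]
  have hgen : ∀ k : Fin 3, FreeGroup.of k.succ ∈ jHom.range := by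
    intro k
    fin_cases k
    · exact ⟨E 1, by simp [jHom, E]⟩
    · exact ⟨E 2, by simp [jHom, E]⟩
    · exact ⟨E 3, by simp [jHom, E]⟩
  have hcase : ∀ b, b ∈ jHom.range ∨ t * b ∈ jHom.range := by
    have hmem : ∀ b, t * b ∈ jHom.range → b * t ∈ jHom.range := by
      intro b hb
      have h2 := mul_mem (mul_mem (inv_mem htt) (hconj _ hb)) htt
      convert h2 using 1
      group
    intro b
    induction b using FreeGroup.induction_on with
    | C1 => exact Or.inl (one_mem _)
    | of k =>
      refine Fin.cases (Or.inr htt) (fun k => Or.inl (hgen k)) k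
    | inv_of k _ =>
      refine Fin.cases (Or.inr ?_) (fun k => Or.inl (inv_mem (hgen k))) k
      simp [t]
    | mul x y hx hy =>
      rcases hx with hx | hx <;> rcases hy with hy | hy
      · exact Or.inl (mul_mem hx hy)
      · right
        have := mul_mem (hconj x hx) hy
        convert this using 1
        group
      · right
        have := mul_mem hx hy
        rwa [mul_assoc] at this
      · left
        have := mul_mem (mul_mem (hmem x hx) (inv_mem htt)) hy
        convert this using 1
        group
  rw [Subgroup.index_eq_two_iff']
  refine ⟨t, fun b => ?_⟩
  rcases hcase b with hb | hb
  · refine Or.inr ⟨hb, fun h => ?_⟩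
    have := hpar _ h
    rw [map_mul, hpar _ hb, hpart] at this
    revert this
    decide
  · refine Or.inl ⟨hb, fun h => ?_⟩
    have := hpar _ hb
    rw [map_mul, hpar _ h, hpart] at this
    revert this
    decide

lemma iHom_injective (m : ℕ) (hm : 3 ≤ m) : Function.Injective (iHom m) := by
  have hcast : ∀ a b : ℕ, a < m → b < m → a ≠ b → (a : ZMod m) ≠ (b : ZMod m) := by
    intro a b ha hb hab h
    rw [ZMod.natCast_eq_natCast_iff'] at h
    rw [Nat.mod_eq_of_lt ha, Nat.mod_eq_of_lt hb] at h
    exact hab h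
  have h01 : (0 : ZMod m) ≠ 1 := by exact_mod_cast hcast 0 1 (by omega) (by omega) (by omega)
  have h02 : (0 : ZMod m) ≠ 2 := by exact_mod_cast hcast 0 2 (by omega) (by omega) (by omega)
  have h12 : (1 : ZMod m) ≠ 2 := by exact_mod_cast hcast 1 2 (by omega) (by omega) (by omega)
  let E : Fin 7 → FreeGroup (Fin 7) := FreeGroup.of
  -- The base vertex is `2`, and `y` acts as `2 → 1 → 0 → 2`.
  let Y : Equiv.Perm (ZMod m × FreeGroup (Fin 7)) :=
    labelPerm (Equiv.swap 0 2 * Equiv.swap 1 2) (fun v => if v = 2 then E 0 else 1)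
  -- The label of `w` at `2` is what makes `y⁻¹w^my` carry the label `E 5`.
  let W : Equiv.Perm (ZMod m × FreeGroup (Fin 7)) :=
    labelPerm (Equiv.addRight 1) (fun v => if v = 0 then E 0 * E 1 else if v = 1 then E 4 else
      if v = 2 then (E 1)⁻¹ * E 5 * (E 0)⁻¹ * (E 4)⁻¹ else 1)
  let R : Equiv.Perm (ZMod m × FreeGroup (Fin 7)) :=
    labelPerm 1 (fun v => if v = 0 then E 3 else if v = 1 then E 6 else E 2)
  let Φ : FreeGroup (Fin 3) →* Equiv.Perm (ZMod m × FreeGroup (Fin 7)) :=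
    FreeGroup.lift ![Y, W * Y⁻¹ * Y⁻¹, R]
  have y2 : ∀ g, Y (2, g) = (1, E 0 * g) := fun g => by
    simp [Y, labelPerm_apply, Equiv.swap_apply_of_ne_of_ne h01.symm h12]
  have y1 : ∀ g, Y (1, g) = (0, g) := fun g => by
    simp [Y, labelPerm_apply, h12]
  have y0 : ∀ g, Y (0, g) = (2, g) := fun g => by
    simp [Y, labelPerm_apply, h02, Equiv.swap_apply_of_ne_of_ne h01 h02]
  have yi2 : ∀ g, Y.symm (2, g) = (0, g) := fun g => by rw [Equiv.symm_apply_eq, y0]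
  have yi0 : ∀ g, Y.symm (0, g) = (1, g) := fun g => by rw [Equiv.symm_apply_eq, y1]
  have yi1 : ∀ g, Y.symm (1, g) = (2, (E 0)⁻¹ * g) := fun g => by
    rw [Equiv.symm_apply_eq, y2, mul_inv_cancel_left]
  have w0 : ∀ g, W (0, g) = (1, E 0 * E 1 * g) := fun g => by
    simp [W, labelPerm_apply]
  have w1 : ∀ g, W (1, g) = (2, E 4 * g) := fun g => by
    simp [W, labelPerm_apply, h01.symm, one_add_one_eq_two]
  have w2 : ∀ g, W (2, g) = (((3 : ℕ) : ZMod m), (E 1)⁻¹ * E 5 * (E 0)⁻¹ * (E 4)⁻¹ * g) := fun g => by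
    simp [W, labelPerm_apply, h02.symm, h12.symm]
    norm_num
  have wn : ∀ n : ℕ, 3 + n ≤ m → ∀ g, (W ^ n) (((3 : ℕ) : ZMod m), g) = (((3 + n : ℕ) : ZMod m), g) := by
    intro n
    induction n with
    | zero => simp
    | succ n ih =>
      intro hn g
      have e0 : ((3 + n : ℕ) : ZMod m) ≠ 0 := by
        exact_mod_cast hcast (3 + n) 0 (by omega) (by omega) (by omega)
      have e1 : ((3 + n : ℕ) : ZMod m) ≠ 1 := by
        exact_mod_cast hcast (3 + n) 1 (by omega) (by omega) (by omega)
      have e2 : ((3 + n : ℕ) : ZMod m) ≠ 2 := by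
        exact_mod_cast hcast (3 + n) 2 (by omega) (by omega) (by omega)
      rw [pow_succ', Equiv.Perm.mul_apply, ih (by omega)]
      simp only [W, labelPerm_apply, if_neg e0, if_neg e1, if_neg e2, one_mul]
      simp [add_assoc]
  have wm : ∀ g, (W ^ m) (1, g) =
      (1, E 0 * E 1 * ((E 1)⁻¹ * E 5 * (E 0)⁻¹ * (E 4)⁻¹ * (E 4 * g))) := by
    intro g
    have hsplit : W ^ m = W * (W ^ (m - 3) * (W * W)) := by
      rw [← pow_two, ← pow_add, ← pow_succ']
      congr 1
      omega
    rw [hsplit]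
    simp only [Equiv.Perm.mul_apply]
    rw [w1, w2, wn _ (by omega), show 3 + (m - 3) = m by omega, ZMod.natCast_self, w0]
  have r0 : ∀ g, R (0, g) = (0, E 3 * g) := fun g => by simp [R, labelPerm_apply]
  have r1 : ∀ g, R (1, g) = (1, E 6 * g) := fun g => by simp [R, labelPerm_apply, h01.symm]
  have r2 : ∀ g, R (2, g) = (2, E 2 * g) := fun g => by
    simp [R, labelPerm_apply, h02.symm, h12.symm]
  have hX : (Y⁻¹ * (W * Y⁻¹ * Y⁻¹) * Y ^ 3) ^ m = Y⁻¹ * W ^ m * Y := by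
    have : Y⁻¹ * (W * Y⁻¹ * Y⁻¹) * Y ^ 3 = Y⁻¹ * W * Y⁻¹⁻¹ := by group
    rw [this, conj_pow, inv_inv]
  refine injective_of_action (iHom m) Φ 2 ?_
  intro k g
  fin_cases k
  · simp [iHom, Φ, pow_succ, y0, y1, y2, E]
  · simp [iHom, Φ, yi1, yi2, w0, E, mul_assoc]
  · simp [iHom, Φ, r2, E]
  · simp [iHom, Φ, y0, yi2, r0, E]
  · simp [iHom, Φ, yi0, yi2, w1, E]
  · have : Φ (iHom m (FreeGroup.of 5)) = Y⁻¹ * W ^ m * Y := by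
      rw [← hX]
      simp [iHom, Φ]
    change Φ (iHom m (FreeGroup.of 5)) (2, g) = _
    rw [this]
    simp only [Equiv.Perm.mul_apply]
    rw [y2, wm, Equiv.Perm.inv_def, yi1]
    simp [E, mul_assoc]
  · simp [iHom, Φ, pow_succ, y0, y1, yi0, yi2, r1, E]

/-! ### Change of generators -/

section Words

variable {K : Type} [Group K]

/-- `(uv)^m = (vu)^m` says that `(uv)^m` commutes with `v`. -/
lemma mul_pow_comm_iff (u v : K) (m : ℕ) : (u * v) ^ m = (v * u) ^ m ↔ Commute ((u * v) ^ m) v := by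
  have h : (v * u) ^ m = v * (u * v) ^ m * v⁻¹ := by
    rw [← conj_pow]
    group
  rw [h, eq_mul_inv_iff_mul_eq]
  rfl

/-- The element `ab`, with `a = c³z`, `b = y⁻¹t` and `c = ty⁻¹`, is conjugate by `ct` to
`y⁻¹zy³`. -/
lemma ab_eq_conj {y z t : K} (ht : t ^ 2 = y ^ 3) (hz : t * (y⁻¹ * z * y) * t⁻¹ = z) :
    (t * y⁻¹) ^ 3 * z * (y⁻¹ * t) =
      (t * y⁻¹ * t) * (y⁻¹ * z * y ^ 3) * (t * y⁻¹ * t)⁻¹ := by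
  have hc : t * y⁻¹ * z = z * (t * y⁻¹) := by
    nth_rewrite 2 [← hz]
    group
  have hcb : t * y⁻¹ * (y⁻¹ * t) = t * (t * y⁻¹)⁻¹ := by
    have : t = y ^ 3 * t⁻¹ := by rw [← ht]; group
    calc t * y⁻¹ * (y⁻¹ * t) = t * y⁻¹ * (y⁻¹ * (y ^ 3 * t⁻¹)) := by rw [← this]
      _ = _ := by group
  have ht' : y ^ 3 * t⁻¹ = t := by rw [← ht]; group
  calc (t * y⁻¹) ^ 3 * z * (y⁻¹ * t)
      = (t * y⁻¹) ^ 2 * (t * y⁻¹ * z) * (y⁻¹ * t) := by simp only [pow_succ _ 2, mul_assoc]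
    _ = (t * y⁻¹) ^ 2 * z * (t * y⁻¹ * (y⁻¹ * t)) := by rw [hc]; group
    _ = (t * y⁻¹) * (t * y⁻¹ * z) * t * (t * y⁻¹)⁻¹ := by
      rw [hcb]
      simp only [pow_two, mul_assoc]
    _ = (t * y⁻¹) * (t * y⁻¹ * z) * (y ^ 3 * t⁻¹) * (t * y⁻¹)⁻¹ := by rw [ht']
    _ = _ := by group

/-- The relation of length `2m`, rewritten in the new generators with `r = t⁻¹(y⁻¹zy³)^m t`. -/
lemma long_relation_iff {y z t r : K} {m : ℕ} (ht : t ^ 2 = y ^ 3)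
    (hz : t * (y⁻¹ * z * y) * t⁻¹ = z) (hr : t * r * t⁻¹ = (y⁻¹ * z * y ^ 3) ^ m) :
    ((t * y⁻¹) ^ 3 * z * (y⁻¹ * t)) ^ m = ((y⁻¹ * t) * ((t * y⁻¹) ^ 3 * z)) ^ m ↔
      t * (y * r * y⁻¹) * t⁻¹ = y ^ 2 * r * (y ^ 2)⁻¹ := by
  have hb : y⁻¹ * t = (t * y⁻¹ * t) * (t * ((y ^ 2)⁻¹ * t * y) * t⁻¹) * (t * y⁻¹ * t)⁻¹ := by
    have h1 : t * t = y ^ 3 := by rw [← ht, pow_two]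
    have h2 : t⁻¹ * t⁻¹ = (y ^ 3)⁻¹ := by rw [← h1, mul_inv_rev]
    symm
    calc (t * y⁻¹ * t) * (t * ((y ^ 2)⁻¹ * t * y) * t⁻¹) * (t * y⁻¹ * t)⁻¹
        = t * y⁻¹ * (t * t) * (y ^ 2)⁻¹ * t * y * (t⁻¹ * t⁻¹) * y * t⁻¹ := by group
      _ = t * y⁻¹ * y ^ 3 * (y ^ 2)⁻¹ * t * y * (y ^ 3)⁻¹ * y * t⁻¹ := by rw [h1, h2]
      _ = (t * t) * y⁻¹ * t⁻¹ := by simp [pow_succ, mul_assoc]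
      _ = y⁻¹ * (t * t) * t⁻¹ := by rw [h1]; group
      _ = y⁻¹ * t := by group
  rw [mul_pow_comm_iff, ab_eq_conj ht hz, conj_pow, ← hr, hb, Commute.conj_iff, Commute.conj_iff]
  constructor
  · intro h
    calc t * (y * r * y⁻¹) * t⁻¹ = y ^ 2 * ((y ^ 2)⁻¹ * t * y * r) * y⁻¹ * t⁻¹ := by group
      _ = y ^ 2 * (r * ((y ^ 2)⁻¹ * t * y)) * y⁻¹ * t⁻¹ := by rw [h.eq]
      _ = _ := by group
  · intro h
    calc r * ((y ^ 2)⁻¹ * t * y) = (y ^ 2)⁻¹ * (y ^ 2 * r * (y ^ 2)⁻¹) * t * y := by group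
      _ = (y ^ 2)⁻¹ * (t * (y * r * y⁻¹) * t⁻¹) * t * y := by rw [h]
      _ = _ := by group

/-- In the new generators, two homomorphisms agree on `F₇` exactly when these seven relations
hold. -/
lemma comp_eq_comp_iff (m : ℕ) (f : FreeGroup (Fin 3) →* K) (g : FreeGroup (Fin 4) →* K)
    {y z r t e₁ e₂ e₃ : K} (hy : f (FreeGroup.of 0) = y) (hz : f (FreeGroup.of 1) = z)
    (hr : f (FreeGroup.of 2) = r) (ht : g (FreeGroup.of 0) = t) (h₁ : g (FreeGroup.of 1) = e₁)
    (h₂ : g (FreeGroup.of 2) = e₂) (h₃ : g (FreeGroup.of 3) = e₃) :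
    f.comp (iHom m) = g.comp jHom ↔
      y ^ 3 = t ^ 2 ∧ y⁻¹ * z * y = e₁ ∧ r = e₂ ∧ y * r * y⁻¹ = e₃ ∧ z = t * e₁ * t⁻¹ ∧
      (y⁻¹ * z * y ^ 3) ^ m = t * e₂ * t⁻¹ ∧ y ^ 2 * r * (y ^ 2)⁻¹ = t * e₃ * t⁻¹ := by
  subst hy hz hr ht h₁ h₂ h₃
  constructor
  · intro h
    have h' : ∀ k, f (iHom m (FreeGroup.of k)) = g (jHom (FreeGroup.of k)) :=
      fun k => DFunLike.congr_fun h _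
    exact ⟨by simpa [iHom, jHom] using h' 0, by simpa [iHom, jHom] using h' 1,
      by simpa [iHom, jHom] using h' 2, by simpa [iHom, jHom] using h' 3,
      by simpa [iHom, jHom] using h' 4, by simpa [iHom, jHom] using h' 5,
      by simpa [iHom, jHom] using h' 6⟩
  · rintro ⟨h0, h1, h2, h3, h4, h5, h6⟩
    ext k
    fin_cases k
    · simpa [iHom, jHom] using h0
    · simpa [iHom, jHom] using h1
    · simpa [iHom, jHom] using h2
    · simpa [iHom, jHom] using h3
    · simpa [iHom, jHom] using h4
    · simpa [iHom, jHom] using h5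
    · simpa [iHom, jHom] using h6

end Words

end Art232m

/-- For `m ≥ 3`, there are a free group of rank 3, a free group of
rank 4, a free group of rank 7 and injections `i : F₇ → F₃`, `j : F₇ → F₄` with
`j(F₇)` of index 2 in `F₄`, such that `Art_{2,3,2m}` is the amalgamated product
`F₃ *_{F₇} F₄` over `i` and `j`. -/
theorem art232m_splits (m : ℕ) (hm : 3 ≤ m) :
    ∃ (i : FreeGroup (Fin 7) →* FreeGroup (Fin 3))
      (j : FreeGroup (Fin 7) →* FreeGroup (Fin 4)),
      Function.Injective i ∧ Function.Injective j ∧ j.range.index = 2 ∧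
      ∃ (ιA : FreeGroup (Fin 3) →* Art232m m) (ιB : FreeGroup (Fin 4) →* Art232m m),
        IsAmalgamatedProduct i j ιA ιB := by
  let a : Art232m m := PresentedGroup.of 0
  let b : Art232m m := PresentedGroup.of 1
  let c : Art232m m := PresentedGroup.of 2
  have hrel : ∀ w ∈ Art232m.rels m, PresentedGroup.mk (Art232m.rels m) w = 1 := fun w hw =>
    PresentedGroup.one_of_mem hw
  have hac : a * c = c * a := by
    have := hrel _ (Or.inl rfl)
    rwa [map_mul, map_inv, mul_inv_eq_one, map_mul, map_mul] at this
  have hbc : b * c * b = c * b * c := by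
    have := hrel _ (Or.inr (Or.inl rfl))
    rwa [map_mul, map_inv, mul_inv_eq_one, map_mul, map_mul, map_mul, map_mul] at this
  have hab : (a * b) ^ m = (b * a) ^ m := by
    have := hrel _ (Or.inr (Or.inr rfl))
    rwa [map_mul, map_inv, mul_inv_eq_one, map_pow, map_pow, map_mul, map_mul] at this
  let y := b * c
  let t := b * c * b
  let z := (c ^ 3)⁻¹ * a
  let r := t⁻¹ * (y⁻¹ * z * y ^ 3) ^ m * t
  have eb : y⁻¹ * t = b := by simp only [y, t]; group
  have ec : t * y⁻¹ = c := by simp only [y, t, hbc]; group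
  have ea : (t * y⁻¹) ^ 3 * z = a := by rw [ec]; simp only [z]; group
  have ht : t ^ 2 = y ^ 3 := by
    calc t ^ 2 = (b * c * b) * (b * c * b) := pow_two _
      _ = (b * c * b) * (c * b * c) := by rw [hbc]
      _ = y ^ 3 := by simp only [y, pow_succ, pow_zero, one_mul, mul_assoc]
  have hcz : c * z = z * c := by
    calc c * z = (c ^ 3)⁻¹ * (c * a) := by simp only [z]; group
      _ = z * c := by rw [← hac]; simp only [z]; group
  have hz : t * (y⁻¹ * z * y) * t⁻¹ = z := by
    calc t * (y⁻¹ * z * y) * t⁻¹ = (t * y⁻¹) * z * (t * y⁻¹)⁻¹ := by group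
      _ = z := by rw [ec, hcz]; group
  have hr : t * r * t⁻¹ = (y⁻¹ * z * y ^ 3) ^ m := by simp only [r]; group
  have hlong : t * (y * r * y⁻¹) * t⁻¹ = y ^ 2 * r * (y ^ 2)⁻¹ := by
    rw [← Art232m.long_relation_iff ht hz hr, ea, eb]
    exact hab
  let ιA : FreeGroup (Fin 3) →* Art232m m := FreeGroup.lift ![y, z, r]
  let ιB : FreeGroup (Fin 4) →* Art232m m := FreeGroup.lift ![t, y⁻¹ * z * y, r, y * r * y⁻¹]
  have Ay : ιA (FreeGroup.of 0) = y := by simp [ιA]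
  have Az : ιA (FreeGroup.of 1) = z := by simp [ιA]
  have Ar : ιA (FreeGroup.of 2) = r := by simp [ιA]
  have Bt : ιB (FreeGroup.of 0) = t := by simp [ιB]
  have B1 : ιB (FreeGroup.of 1) = y⁻¹ * z * y := by simp [ιB]
  have B2 : ιB (FreeGroup.of 2) = r := by simp [ιB]
  have B3 : ιB (FreeGroup.of 3) = y * r * y⁻¹ := by simp [ιB]
  refine ⟨Art232m.iHom m, Art232m.jHom, Art232m.iHom_injective m hm, Art232m.jHom_injective,
    Art232m.jHom_index, ιA, ιB, ?_, ?_⟩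
  · rw [Art232m.comp_eq_comp_iff m ιA ιB Ay Az Ar Bt B1 B2 B3]
    exact ⟨ht.symm, rfl, rfl, rfl, hz.symm, hr.symm, hlong.symm⟩
  · intro K _ f g hfg
    rw [Art232m.comp_eq_comp_iff m f g rfl rfl rfl rfl rfl rfl rfl] at hfg
    obtain ⟨k0, k1, k2, k3, k4, k5, k6⟩ := hfg
    set Y := f (FreeGroup.of 0) with hY
    set Z := f (FreeGroup.of 1) with hZ
    set R := f (FreeGroup.of 2) with hR
    set T := g (FreeGroup.of 0) with hT
    rw [← k1] at k4
    rw [← k2] at k5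
    rw [← k3] at k6
    let v : Fin 3 → K := ![(T * Y⁻¹) ^ 3 * Z, Y⁻¹ * T, T * Y⁻¹]
    have Kbc : Y⁻¹ * T * (T * Y⁻¹) = Y := by
      calc Y⁻¹ * T * (T * Y⁻¹) = Y⁻¹ * T ^ 2 * Y⁻¹ := by simp only [pow_two, mul_assoc]
        _ = Y := by rw [← k0]; group
    have Kcz : T * Y⁻¹ * Z = Z * (T * Y⁻¹) := by
      nth_rewrite 2 [k4]
      group
    have hv : ∀ w ∈ Art232m.rels m, FreeGroup.lift v w = 1 := by
      rintro w (rfl | rfl | rfl)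
      · simp only [Art232m.a, Art232m.c, map_mul, map_inv, FreeGroup.lift_apply_of, mul_inv_eq_one]
        change (T * Y⁻¹) ^ 3 * Z * (T * Y⁻¹) = T * Y⁻¹ * ((T * Y⁻¹) ^ 3 * Z)
        rw [mul_assoc, ← Kcz]
        simp only [pow_succ, pow_zero, one_mul, mul_assoc]
      · simp only [Art232m.b, Art232m.c, map_mul, map_inv, FreeGroup.lift_apply_of, mul_inv_eq_one]
        change Y⁻¹ * T * (T * Y⁻¹) * (Y⁻¹ * T) = T * Y⁻¹ * (Y⁻¹ * T) * (T * Y⁻¹)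
        rw [Kbc, mul_assoc (T * Y⁻¹), Kbc]
        group
      · simp only [Art232m.a, Art232m.b, map_mul, map_inv, map_pow, FreeGroup.lift_apply_of,
          mul_inv_eq_one]
        exact (Art232m.long_relation_iff k0.symm k4.symm k5.symm).mpr k6.symm
    let h : Art232m m →* K := PresentedGroup.toGroup hv
    have ha : h a = (T * Y⁻¹) ^ 3 * Z := PresentedGroup.toGroup.of hv
    have hb : h b = Y⁻¹ * T := PresentedGroup.toGroup.of hv
    have hc : h c = T * Y⁻¹ := PresentedGroup.toGroup.of hv
    have hy : h y = Y := by simp only [y, map_mul, hb, hc, Kbc]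
    have ht' : h t = T := by
      simp only [t, map_mul, hb, hc, Kbc]
      group
    have hz' : h z = Z := by
      simp only [z, map_mul, map_inv, map_pow, ha, hc]
      group
    have hr' : h r = R := by
      simp only [r, map_mul, map_inv, map_pow, hy, ht', hz', k5]
      group
    refine ⟨h, ⟨?_, ?_⟩, ?_⟩
    · ext k
      fin_cases k
      · exact (congrArg h Ay).trans hy
      · exact (congrArg h Az).trans hz'
      · exact (congrArg h Ar).trans hr'
    · ext k
      fin_cases k
      · exact (congrArg h Bt).trans ht'
      · refine (congrArg h B1).trans (Eq.trans ?_ k1)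
        simp only [map_mul, map_inv, hy, hz']
      · exact (congrArg h B2).trans (hr'.trans k2)
      · refine (congrArg h B3).trans (Eq.trans ?_ k3)
        simp only [map_mul, map_inv, hy, hr']
    · -- The Artin group is generated by the images of `y`, `z` and `t`.
      rintro h' ⟨hA, hB⟩
      have gy : h' y = Y := by rw [← Ay]; exact DFunLike.congr_fun hA _
      have gz : h' z = Z := by rw [← Az]; exact DFunLike.congr_fun hA _
      have gt : h' t = T := by rw [← Bt]; exact DFunLike.congr_fun hB _
      have ga : h' a = h a := by
        rw [ha, ← ea]
        simp only [map_mul, map_inv, map_pow, gy, gz, gt]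
      have gb : h' b = h b := by
        rw [hb, ← eb]
        simp only [map_mul, map_inv, gy, gt]
      have gc : h' c = h c := by
        rw [hc, ← ec]
        simp only [map_mul, map_inv, gy, gt]
      refine PresentedGroup.ext fun k => ?_
      fin_cases k
      · exact ga
      · exact gb
      · exact gc
end

section
/- Assume M, N, P ≥ 2 are pairwise coprime integers. Then the commutator subgroup of the triangle Artin group Art_{M,N,P} is perfect, i.e. the derived subgroup [A,A] of A = Art_{M,N,P} satisfies [[A,A],[A,A]] = [A,A]. -/
/-!
The proof computes the Alexander module. Write `A = Art_{M,N,P}`, `D = [A,A]`, `V = D/[D,D]`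
(written additively), and let `σ` be the automorphism of `V` induced by conjugation by `a`.

* At most one of `M, N, P` is even, and an odd relation identifies its two generators in the
  abelianization. Hence `a`, `b`, `c` agree modulo `D`, they all act on `V` by `σ`, and
  `u = ab⁻¹`, `v = bc⁻¹`, `w = ca⁻¹` have classes in `V` with `u + v + w = 0`.
* With `s = -σ`, the class of `{x,y}_n {y,x}_n⁻¹` is `(1 + s + ⋯ + s^(n-1)) [xy⁻¹]`
  (`class_altG`), so the three relations say that `u`, `v`, `w` are killed by the geometric sums
  of lengths `M`, `N`, `P` in `s`.
* Geometric sums of coprime lengths have no common nonzero kernel element (`geom_coprime`): such an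
  `x` satisfies `s^m x = x = s^n x`, so `s x = x`, so `m x = 0 = n x`. Since `u = -(v + w)` is
  killed by the sum of length `M` and by the product of the other two, `u = 0` (`eq_zero_of_geom`);
  likewise `v = 0`.

Thus `ab⁻¹` and `bc⁻¹` lie in `[D,D]`, the quotient `A/[D,D]` is cyclic, and `D ≤ [D,D]`.
-/

/-- The alternating word `{x,y}_K = xyxy⋯` of length `K` starting with `x`. -/
def altWord {α : Type} : ℕ → FreeGroup α → FreeGroup α → FreeGroup α
  | 0, _, _ => 1
  | n + 1, x, y => x * altWord n y x

/-- Generators: `0 ↦ a`, `1 ↦ b`, `2 ↦ c`. -/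
def ArtinTri.a : FreeGroup (Fin 3) := FreeGroup.of 0
def ArtinTri.b : FreeGroup (Fin 3) := FreeGroup.of 1
def ArtinTri.c : FreeGroup (Fin 3) := FreeGroup.of 2

/-- Relators of the triangle Artin group
`Art_{M,N,P} = ⟨a,b,c | {a,b}_M = {b,a}_M, {b,c}_N = {c,b}_N, {c,a}_P = {a,c}_P⟩`. -/
def ArtinTri.rels (M N P : ℕ) : Set (FreeGroup (Fin 3)) :=
  { altWord M ArtinTri.a ArtinTri.b * (altWord M ArtinTri.b ArtinTri.a)⁻¹,
    altWord N ArtinTri.b ArtinTri.c * (altWord N ArtinTri.c ArtinTri.b)⁻¹,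
    altWord P ArtinTri.c ArtinTri.a * (altWord P ArtinTri.a ArtinTri.c)⁻¹ }

/-- The triangle Artin group `Art_{M,N,P}`. -/
abbrev ArtinTri (M N P : ℕ) : Type := PresentedGroup (ArtinTri.rels M N P)

/-! ### Geometric sums of an endomorphism -/

section Module

variable {V : Type*} [AddCommGroup V]

/-- The geometric sum `1 + s + ⋯ + s^(n-1)` in the endomorphism ring of `V`. -/
def geomEnd (s : AddMonoid.End V) (n : ℕ) : AddMonoid.End V :=
  ∑ i ∈ Finset.range n, s ^ i

theorem geomEnd_succ_apply (s : AddMonoid.End V) (n : ℕ) (x : V) :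
    geomEnd s (n + 1) x = s (geomEnd s n x) + x := by
  have h : geomEnd s (n + 1) = s * geomEnd s n + 1 := by
    simp only [geomEnd]
    exact geom_sum_succ
  rw [h]
  rfl

theorem geomEnd_comm (s : AddMonoid.End V) (m n : ℕ) (x : V) :
    geomEnd s m (geomEnd s n x) = geomEnd s n (geomEnd s m x) := by
  have h : Commute (geomEnd s m) (geomEnd s n) :=
    Commute.sum_left _ _ _ fun i _ => Commute.sum_right _ _ _ fun j _ =>
      (Commute.refl s).pow_pow i j
  exact congrArg (fun f : AddMonoid.End V => f x) h.eq

theorem iterate_of_geom {s : AddMonoid.End V} {n : ℕ} {x : V} (h : geomEnd s n x = 0) :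
    (s : V → V)^[n] x = x := by
  have h1 : (s - 1) * geomEnd s n = s ^ n - 1 := mul_geom_sum s n
  have h2 : (s ^ n - 1) x = 0 := by
    rw [← h1]
    change (s - 1) (geomEnd s n x) = 0
    rw [h, map_zero]
  have h3 : (s ^ n) x - x = 0 := h2
  rw [← AddMonoid.End.coe_pow]
  exact sub_eq_zero.mp h3

theorem geomEnd_of_fixed {s : AddMonoid.End V} {x : V} (h : s x = x) (n : ℕ) :
    geomEnd s n x = n • x := by
  induction n with
  | zero => simp [geomEnd]
  | succ n ih => rw [geomEnd_succ_apply, ih, map_nsmul, h, succ_nsmul]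

/-- Geometric sums of coprime lengths have no common nonzero kernel element: `x` is periodic
under `s` with both periods, hence fixed, and its additive order divides both lengths. -/
theorem geom_coprime {s : AddMonoid.End V} {m n : ℕ} (hmn : m.Coprime n) {x : V}
    (hm : geomEnd s m x = 0) (hn : geomEnd s n x = 0) : x = 0 := by
  have h1 : Function.IsPeriodicPt s (m.gcd n) x :=
    Function.IsPeriodicPt.gcd (iterate_of_geom hm) (iterate_of_geom hn)
  rw [hmn] at h1
  have hfix : s x = x := h1
  rw [geomEnd_of_fixed hfix] at hm hn
  have h2 : addOrderOf x ∣ m.gcd n :=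
    Nat.dvd_gcd (addOrderOf_dvd_of_nsmul_eq_zero hm) (addOrderOf_dvd_of_nsmul_eq_zero hn)
  rw [hmn] at h2
  exact AddMonoid.addOrderOf_eq_one_iff.mp (Nat.dvd_one.mp h2)

/-- Since `u = -(v + w)`, the sum of length `p` kills the image of `u` under the sum of length `n`,
and so does the sum of length `m`; two applications of `geom_coprime` give `u = 0`. -/
theorem eq_zero_of_geom {s : AddMonoid.End V} {m n p : ℕ} (hmn : m.Coprime n)
    (hmp : m.Coprime p) {u v w : V} (huvw : u + v + w = 0)
    (hu : geomEnd s m u = 0) (hv : geomEnd s n v = 0) (hw : geomEnd s p w = 0) : u = 0 := by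
  refine geom_coprime hmn hu (geom_coprime (s := s) hmp ?_ ?_)
  · rw [geomEnd_comm, hu, map_zero]
  · have h : u = -(v + w) := by rw [add_assoc] at huvw; exact eq_neg_of_add_eq_zero_left huvw
    rw [h, map_neg, map_add, hv, zero_add, map_neg, geomEnd_comm, hw, map_zero, neg_zero]

end Module

/-! ### Alternating words in a group -/

section Words

variable {G : Type*} [Group G]

/-- The alternating product `xyxy⋯` with `n` factors, for elements of an arbitrary group. -/
def altG : ℕ → G → G → G
  | 0, _, _ => 1
  | n + 1, x, y => x * altG n y x

theorem map_altWord {α : Type} (f : FreeGroup α →* G) (n : ℕ) (x y : FreeGroup α) :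
    f (altWord n x y) = altG n (f x) (f y) := by
  induction n generalizing x y with
  | zero => simp [altWord, altG]
  | succ n ih => simp [altWord, altG, ih]

theorem map_altG {H : Type*} [Group H] (f : G →* H) (n : ℕ) (x y : G) :
    f (altG n x y) = altG n (f x) (f y) := by
  induction n generalizing x y with
  | zero => simp [altG]
  | succ n ih => simp [altG, ih]

/-- The recursion for `{x,y}_n {y,x}_n⁻¹`, a group-level form of Fox calculus. -/
theorem altG_div_succ (n : ℕ) (x y : G) :
    altG (n + 1) x y * (altG (n + 1) y x)⁻¹ =
      x * (altG n x y * (altG n y x)⁻¹)⁻¹ * x⁻¹ * (x * y⁻¹) := by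
  simp only [altG]
  group

/-- In a commutative group `{x,y}_n {y,x}_n⁻¹` is `xy⁻¹` for odd `n`. -/
theorem eq_of_altG_odd {H : Type*} [CommGroup H] {n : ℕ} (hn : Odd n) {x y : H}
    (h : altG n x y = altG n y x) : x = y := by
  have key : ∀ k : ℕ, altG (2 * k + 1) x y * (altG (2 * k + 1) y x)⁻¹ = x * y⁻¹ := by
    intro k
    induction k with
    | zero => simp [altG]
    | succ k ih =>
      rw [show 2 * (k + 1) + 1 = 2 * k + 1 + 1 + 1 from rfl, altG_div_succ, altG_div_succ, ih,
        mul_inv_cancel_comm x, mul_inv_cancel_comm x]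
      simp
  obtain ⟨k, rfl⟩ := hn
  have := key k
  rw [h, mul_inv_cancel] at this
  exact (mul_inv_eq_one.mp this.symm)

theorem mul_inv_mem_commutator_of_odd {n : ℕ} (hn : Odd n) {x y : G}
    (h : altG n x y = altG n y x) : x * y⁻¹ ∈ commutator G := by
  have h1 : Abelianization.of x = Abelianization.of y := by
    apply eq_of_altG_odd hn
    rw [← map_altG, ← map_altG, h]
  rw [← Abelianization.ker_of, MonoidHom.mem_ker, map_mul, map_inv, h1, mul_inv_cancel]

end Words

/-! ### The abelianized commutator subgroup as a module -/

section Alexander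

variable {G : Type*} [Group G]

/-- The abelianization of the commutator subgroup of `G`, written additively. -/
abbrev AlexMod (G : Type*) [Group G] : Type _ := Additive (Abelianization (commutator G))

/-- The class in `AlexMod G` of an element of the commutator subgroup. -/
def cls (d : commutator G) : AlexMod G := Additive.ofMul (Abelianization.of d)

theorem cls_mul (d e : commutator G) : cls (d * e) = cls d + cls e := by
  simp [cls]

theorem cls_inv (d : commutator G) : cls d⁻¹ = -cls d := by
  simp [cls]

theorem cls_one : cls (1 : commutator G) = 0 := by
  simp [cls]

/-- The endomorphism of `AlexMod G` induced by conjugation by `x`. -/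
def conjEnd (x : G) : AddMonoid.End (AlexMod G) :=
  MonoidHom.toAdditive (Abelianization.map (MulAut.conjNormal (H := commutator G) x).toMonoidHom)

theorem conjEnd_cls (x : G) (d : commutator G) :
    conjEnd x (cls d) = cls (MulAut.conjNormal x d) := rfl

/-- Elements congruent modulo the commutator subgroup act alike on `AlexMod G`, because inner
automorphisms of `commutator G` act trivially on its abelianization. -/
theorem conjEnd_eq {x y : G} (h : x * y⁻¹ ∈ commutator G) : conjEnd x = conjEnd y := by
  ext v
  obtain ⟨d, rfl⟩ : ∃ d, cls d = v := QuotientGroup.mk_surjective v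
  rw [conjEnd_cls, conjEnd_cls]
  have : MulAut.conjNormal x d =
      (⟨x * y⁻¹, h⟩ : commutator G) * MulAut.conjNormal y d * (⟨x * y⁻¹, h⟩ : commutator G)⁻¹ := by
    ext
    simp [MulAut.conjNormal_apply, mul_assoc]
  rw [this, cls_mul, cls_mul, cls_inv, add_neg_cancel_comm]

/-- The recursion `altG_div_succ` becomes `d ↦ s d + [xy⁻¹]` on classes, where `s` is minus the
conjugation by `x`; it is solved by the geometric sum. -/
theorem class_altG {x y : G} (h : x * y⁻¹ ∈ commutator G) (n : ℕ) :
    ∃ hn : altG n x y * (altG n y x)⁻¹ ∈ commutator G,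
      cls ⟨_, hn⟩ = geomEnd (-conjEnd x) n (cls ⟨_, h⟩) := by
  induction n with
  | zero =>
    refine ⟨by simp [altG, one_mem], ?_⟩
    simp only [altG, geomEnd, Finset.range_zero, Finset.sum_empty]
    exact (congrArg cls (Subtype.ext (by simp))).trans cls_one
  | succ n ih =>
    obtain ⟨hn, ih⟩ := ih
    have e : altG (n + 1) x y * (altG (n + 1) y x)⁻¹ =
        ((MulAut.conjNormal x (⟨_, hn⟩ : commutator G)⁻¹ * ⟨_, h⟩ : commutator G) : G) := by
      rw [altG_div_succ]
      simp only [Subgroup.coe_mul, map_inv, InvMemClass.coe_inv, MulAut.conjNormal_apply]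
      group
    have hn' : altG (n + 1) x y * (altG (n + 1) y x)⁻¹ ∈ commutator G := by
      rw [e]
      exact Subtype.prop _
    refine ⟨hn', ?_⟩
    rw [geomEnd_succ_apply, ← ih]
    have e' : (⟨_, hn'⟩ : commutator G) =
        MulAut.conjNormal x (⟨_, hn⟩ : commutator G)⁻¹ * ⟨_, h⟩ := Subtype.ext e
    rw [e', cls_mul, ← conjEnd_cls, cls_inv, map_neg]
    rfl

theorem geom_cls_eq_zero {x y z : G} (h : x * y⁻¹ ∈ commutator G) (hz : x * z⁻¹ ∈ commutator G)
    {n : ℕ} (hn : altG n x y = altG n y x) :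
    geomEnd (-conjEnd z) n (cls ⟨_, h⟩) = 0 := by
  obtain ⟨h1, h2⟩ := class_altG h n
  rw [← conjEnd_eq hz, ← h2, ← cls_one]
  congr 1
  ext
  simp [hn]

theorem mem_of_cls_eq_zero {d : commutator G} (h : cls d = 0) :
    (d : G) ∈ ⁅commutator G, commutator G⁆ := by
  have h1 : d ∈ commutator (commutator G) :=
    (Abelianization.ker_of (commutator G)).le h
  rw [← Subgroup.map_subtype_commutator]
  exact ⟨d, h1, rfl⟩

end Alexander

/-! ### The perfectness theorem -/

section Main

variable {G : Type*} [Group G]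

/-- Modulo `K` the three generators coincide, so `G ⧸ K` is cyclic, hence commutative. -/
theorem commutator_le_of_generators {a b c : G} (hgen : Subgroup.closure {a, b, c} = ⊤)
    (K : Subgroup G) [K.Normal] (hab : a * b⁻¹ ∈ K) (hbc : b * c⁻¹ ∈ K) : commutator G ≤ K := by
  have hq : ∀ {x y : G}, x * y⁻¹ ∈ K → (x : G ⧸ K) = y := by
    intro x y h
    have := (QuotientGroup.eq_one_iff (N := K) _).mpr h
    rwa [QuotientGroup.mk_mul, QuotientGroup.mk_inv, mul_inv_eq_one] at this
  have hle : Subgroup.closure {a, b, c} ≤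
      (Subgroup.zpowers (a : G ⧸ K)).comap (QuotientGroup.mk' K) := by
    rw [Subgroup.closure_le]
    rintro x hx
    change (x : G ⧸ K) ∈ Subgroup.zpowers (a : G ⧸ K)
    have hxa : (x : G ⧸ K) = a := by
      rcases hx with rfl | rfl | rfl
      · rfl
      · exact (hq hab).symm
      · exact ((hq hab).trans (hq hbc)).symm
    rw [hxa]
    exact Subgroup.mem_zpowers _
  rw [commutator_def, Subgroup.commutator_le]
  intro g _ h _
  have hz : ∀ g : G, (g : G ⧸ K) ∈ Subgroup.zpowers (a : G ⧸ K) := fun g =>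
    hle (by rw [hgen]; trivial)
  obtain ⟨i, hi⟩ := hz g
  obtain ⟨j, hj⟩ := hz h
  have hgh : Commute (g : G ⧸ K) (h : G ⧸ K) := by
    rw [← hi, ← hj]
    exact (Commute.refl (a : G ⧸ K)).zpow_zpow i j
  rw [← QuotientGroup.eq_one_iff]
  simp only [commutatorElement_def, QuotientGroup.mk_mul, QuotientGroup.mk_inv]
  rw [hgh.eq, mul_inv_cancel_right, mul_inv_cancel]

theorem commutator_perfect_of_generators {a b c : G}
    (hgen : Subgroup.closure {a, b, c} = ⊤) {M N P : ℕ}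
    (hMN : M.Coprime N) (hNP : N.Coprime P) (hMP : M.Coprime P)
    (hab : altG M a b = altG M b a) (hbc : altG N b c = altG N c b)
    (hca : altG P c a = altG P a c) :
    ⁅commutator G, commutator G⁆ = commutator G := by
  have trans : ∀ {x y z : G}, x * y⁻¹ ∈ commutator G → y * z⁻¹ ∈ commutator G →
      x * z⁻¹ ∈ commutator G := by
    intro x y z h1 h2
    simpa [mul_assoc] using mul_mem h1 h2
  have symm : ∀ {x y : G}, x * y⁻¹ ∈ commutator G → y * x⁻¹ ∈ commutator G := by
    intro x y h
    simpa using inv_mem h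
  have odd_or : ∀ {m n : ℕ}, m.Coprime n → Odd m ∨ Odd n := by
    intro m n h
    by_contra! h2
    obtain ⟨h3, h4⟩ := h2
    rw [Nat.not_odd_iff_even] at h3 h4
    exact Nat.not_coprime_of_dvd_of_dvd one_lt_two h3.two_dvd h4.two_dvd h
  have hmem : a * b⁻¹ ∈ commutator G ∧ b * c⁻¹ ∈ commutator G := by
    rcases odd_or hMN with hM | hN
    · have h1 := mul_inv_mem_commutator_of_odd hM hab
      rcases odd_or hNP with hN | hP
      · exact ⟨h1, mul_inv_mem_commutator_of_odd hN hbc⟩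
      · exact ⟨h1, symm (trans (mul_inv_mem_commutator_of_odd hP hca) h1)⟩
    · have h1 := mul_inv_mem_commutator_of_odd hN hbc
      rcases odd_or hMP with hM | hP
      · exact ⟨mul_inv_mem_commutator_of_odd hM hab, h1⟩
      · exact ⟨symm (trans h1 (mul_inv_mem_commutator_of_odd hP hca)), h1⟩
  obtain ⟨h1, h2⟩ := hmem
  have h3 : c * a⁻¹ ∈ commutator G := symm (trans h1 h2)
  have haa : a * a⁻¹ ∈ commutator G := by simp [one_mem]
  have hu := geom_cls_eq_zero h1 haa hab
  have hv := geom_cls_eq_zero h2 (symm h1) hbc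
  have hw := geom_cls_eq_zero h3 h3 hca
  have hsum : cls (⟨_, h1⟩ : commutator G) + cls ⟨_, h2⟩ + cls ⟨_, h3⟩ = 0 := by
    rw [← cls_mul, ← cls_mul, ← cls_one]
    congr 1
    ext
    simp [mul_assoc]
  have hu0 := eq_zero_of_geom hMN hMP hsum hu hv hw
  have hv0 := eq_zero_of_geom hNP hMN.symm
    (by rw [← hsum]; abel) hv hw hu
  refine le_antisymm (Subgroup.commutator_le_self _) ?_
  exact commutator_le_of_generators hgen _ (mem_of_cls_eq_zero hu0) (mem_of_cls_eq_zero hv0)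

end Main

/-- If `M, N, P ≥ 2` are pairwise coprime, then the commutator
subgroup of the triangle Artin group `Art_{M,N,P}` is perfect, i.e.
`[[A,A],[A,A]] = [A,A]` for `A = Art_{M,N,P}`. -/
theorem artinTri_commutator_perfect (M N P : ℕ) (hM : 2 ≤ M) (hN : 2 ≤ N) (hP : 2 ≤ P)
    (hMN : Nat.Coprime M N) (hNP : Nat.Coprime N P) (hMP : Nat.Coprime M P) :
    ⁅commutator (ArtinTri M N P), commutator (ArtinTri M N P)⁆ =
      commutator (ArtinTri M N P) := by
  have hrel : ∀ {K : ℕ} {x y : FreeGroup (Fin 3)},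
      altWord K x y * (altWord K y x)⁻¹ ∈ ArtinTri.rels M N P →
      altG K (PresentedGroup.mk (ArtinTri.rels M N P) x) (PresentedGroup.mk _ y) =
        altG K (PresentedGroup.mk _ y) (PresentedGroup.mk _ x) := by
    intro K x y h
    have h1 := PresentedGroup.one_of_mem h
    rw [map_mul, map_inv, mul_inv_eq_one] at h1
    rwa [map_altWord, map_altWord] at h1
  refine commutator_perfect_of_generators
    (a := PresentedGroup.mk _ ArtinTri.a) (b := PresentedGroup.mk _ ArtinTri.b)
    (c := PresentedGroup.mk _ ArtinTri.c) ?_ hMN hNP hMP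
    (hrel (by simp [ArtinTri.rels])) (hrel (by simp [ArtinTri.rels]))
    (hrel (by simp [ArtinTri.rels]))
  rw [eq_top_iff, ← PresentedGroup.closure_range_of, Subgroup.closure_le]
  rintro _ ⟨i, rfl⟩
  apply Subgroup.subset_closure
  fin_cases i
  · exact Or.inl rfl
  · exact Or.inr (Or.inl rfl)
  · exact Or.inr (Or.inr rfl)
end

section
/- Let G be a poly-free group and H a nontrivial subgroup of G. Then either H is polycyclic, or H contains a subgroup isomorphic to the nonabelian free group of rank 2. -/
/-!
Intersecting the subnormal chain of `G` with `H` gives a subnormal chain of `H` whose successive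
quotients embed in free groups, hence are free by the Nielsen–Schreier theorem. A free group is
either cyclic or contains a free group of rank 2. If all the quotients are cyclic, then `H` is
polycyclic. Otherwise some quotient contains a free group of rank 2, and since free groups are
projective that free group lifts to `H`.
-/

/-- A group `G` is poly-free if it has a finite subnormal chain
`1 = G₀ ⊴ G₁ ⊴ ⋯ ⊴ Gₙ = G` whose successive quotients are free groups
(equivalently, each `Gᵢ₊₁` surjects onto a free group with kernel `Gᵢ`). -/
def IsPolyFree (G : Type u) [Group G] : Prop :=
  ∃ (n : ℕ) (s : Fin (n + 1) → Subgroup G),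
    s 0 = ⊥ ∧ s (Fin.last n) = ⊤ ∧
    ∀ i : Fin n, s i.castSucc ≤ s i.succ ∧
      ∃ (ι : Type u) (f : ↥(s i.succ) →* FreeGroup ι),
        Function.Surjective f ∧ f.ker = (s i.castSucc).subgroupOf (s i.succ)

/-- A group `H` is polycyclic if it has a finite subnormal chain
`1 = H₀ ⊴ H₁ ⊴ ⋯ ⊴ Hₖ = H` whose successive quotients are cyclic (equivalently,
each `Hᵢ` is normal in `Hᵢ₊₁` and `Hᵢ₊₁` is generated by `Hᵢ` together with a
single element). -/
def IsPolycyclic (H : Type u) [Group H] : Prop :=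
  ∃ (n : ℕ) (s : Fin (n + 1) → Subgroup H),
    s 0 = ⊥ ∧ s (Fin.last n) = ⊤ ∧
    ∀ i : Fin n, s i.castSucc ≤ s i.succ ∧
      (∀ g ∈ s i.succ, ∀ h ∈ s i.castSucc, g * h * g⁻¹ ∈ s i.castSucc) ∧
      ∃ x : H, s i.succ = s i.castSucc ⊔ Subgroup.closure {x}

/-- A free group of rank at most 1 is cyclic; otherwise two distinct free generators generate a
free subgroup of rank 2. -/
lemma isCyclic_or_exists_injective_of_isFreeGroup (F : Type u) [Group F] [IsFreeGroup F] :
    IsCyclic F ∨ ∃ φ : FreeGroup (Fin 2) →* F, Function.Injective φ := by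
  let e := IsFreeGroup.mulEquiv F
  rcases subsingleton_or_nontrivial (IsFreeGroup.Generators F) with h | ⟨a, b, hab⟩
  · left
    have : IsCyclic (FreeGroup (IsFreeGroup.Generators F)) := by
      rcases isEmpty_or_nonempty (IsFreeGroup.Generators F) with h0 | ⟨⟨a⟩⟩
      · infer_instance
      · refine ⟨FreeGroup.of a, fun x => ?_⟩
        change x ∈ Subgroup.zpowers (FreeGroup.of a)
        induction x using FreeGroup.induction_on with
        | C1 => exact one_mem _
        | of y => rw [Subsingleton.elim y a]; exact Subgroup.mem_zpowers _
        | inv_of y hy => exact inv_mem hy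
        | mul x y hx hy => exact mul_mem hx hy
    exact isCyclic_of_surjective e e.surjective
  · right
    refine ⟨e.toMonoidHom.comp (FreeGroup.map ![a, b]), ?_⟩
    refine e.injective.comp (FreeGroup.map_injective ?_)
    intro i j hij
    fin_cases i <;> fin_cases j <;> simp_all [eq_comm]

/-- A nontrivial subgroup of a poly-free group is either polycyclic
or contains a copy of the nonabelian free group of rank 2. -/
theorem polyFree_tits_alternative (G : Type u) [Group G] (hG : IsPolyFree G)
    (H : Subgroup G) (hH : H ≠ ⊥) :
    IsPolycyclic ↥H ∨ ∃ K : Subgroup G, K ≤ H ∧ Nonempty (↥K ≃* FreeGroup (Fin 2)) := by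
  by_cases hfree : ∃ ψ : FreeGroup (Fin 2) →* G, Function.Injective ψ ∧ ψ.range ≤ H
  · obtain ⟨ψ, hψ, hr⟩ := hfree
    exact Or.inr ⟨ψ.range, hr, ⟨(MonoidHom.ofInjective hψ).symm⟩⟩
  left
  obtain ⟨n, s, h0, h1, hs⟩ := hG
  refine ⟨n, fun i => (s i).subgroupOf H, by simp [h0], by simp [h1], fun i => ?_⟩
  obtain ⟨hle, ι, f, -, hker⟩ := hs i
  have hmem : ∀ x : ↥(s i.succ), f x = 1 ↔ (x : G) ∈ s i.castSucc := fun x => by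
    rw [← MonoidHom.mem_ker, hker, Subgroup.mem_subgroupOf]
  refine ⟨fun x hx => hle hx, fun g hg h hh => ?_, ?_⟩
  · have hg' : (g : G) ∈ s i.succ := hg
    have hh' : (h : G) ∈ s i.castSucc := hh
    have key := (hmem ⟨h, hle hh'⟩).2 hh'
    have : f (⟨g, hg'⟩ * ⟨h, hle hh'⟩ * ⟨g, hg'⟩⁻¹) = 1 := by
      rw [map_mul, map_mul, key, mul_one, map_inv, mul_inv_cancel]
    exact (hmem _).1 this
  -- `L` is isomorphic to the quotient `(H ∩ s i.succ) / (H ∩ s i.castSucc)`.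
  let L : Subgroup (FreeGroup ι) := (H.subgroupOf (s i.succ)).map f
  rcases isCyclic_or_exists_injective_of_isFreeGroup L with ⟨⟨⟨_, x, hxH, rfl⟩, hx⟩⟩ | ⟨φ, hφ⟩
  · refine ⟨⟨x, hxH⟩, le_antisymm (fun y hy => ?_) (sup_le (fun y hy => hle hy) ?_)⟩
    · obtain ⟨k, hk⟩ := hx ⟨f ⟨y, hy⟩, ⟨y, hy⟩, y.2, rfl⟩
      have hk' : f x ^ k = f ⟨y, hy⟩ := congrArg Subtype.val hk
      have hq : f (⟨y, hy⟩ * (x ^ k)⁻¹) = 1 := by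
        rw [map_mul, map_inv, map_zpow, hk', mul_inv_cancel]
      have hq' : y * ((⟨x, hxH⟩ : H) ^ k)⁻¹ ∈ (s i.castSucc).subgroupOf H := by
        rw [Subgroup.mem_subgroupOf]
        simpa using (hmem _).1 hq
      rw [← inv_mul_cancel_right y ((⟨x, hxH⟩ : H) ^ k)]
      refine mul_mem (Subgroup.mem_sup_left hq') (Subgroup.mem_sup_right ?_)
      exact zpow_mem (Subgroup.subset_closure (Set.mem_singleton _)) k
    · rw [Subgroup.closure_le, Set.singleton_subset_iff]
      exact x.2
  · exfalso
    choose c hcH hc using fun j : Fin 2 => (φ (FreeGroup.of j)).2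
    let θ : FreeGroup (Fin 2) →* ↥(s i.succ) := FreeGroup.lift c
    have hθ : f.comp θ = L.subtype.comp φ := by
      ext j
      simp [θ, hc]
    have hinj : Function.Injective θ := by
      apply Function.Injective.of_comp (f := f)
      rw [← MonoidHom.coe_comp, hθ]
      exact Subtype.val_injective.comp hφ
    refine hfree ⟨(s i.succ).subtype.comp θ, Subtype.val_injective.comp hinj, ?_⟩
    rintro _ ⟨w, rfl⟩
    have : θ.range ≤ H.subgroupOf (s i.succ) := by
      refine FreeGroup.range_lift_le ?_
      rintro _ ⟨j, rfl⟩
      exact hcH j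
    exact this ⟨w, rfl⟩
end

section
/- Let m ≥ 1 and let A = ⟨a,b | (ab)^m a = b(ab)^m⟩ be the dihedral Artin group of type I_{2m+1}. Suppose A acts without inversions on a tree T and the element ab fixes no vertex of T. Then there is a geodesic line in T whose image is A-invariant and on which A acts by translations. -/
/-!
Put `y = ab` and `x = (ab)^m a`. The relation gives `x² = y^(2m+1)`, and `x`, `y` generate the
group, so `z = y^(2m+1)` is central (`central_pow`).

An element `y` acting without inversions and without a fixed vertex has an axis: choose `v` with
minimal displacement `n = d(v, yv)`; the `y`-translates of the geodesic from `v` to `yv` form a line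
that never backtracks, as backtracking at `yv` would invert an edge or produce a vertex of smaller
displacement (`exists_axis`). In a tree a line without backtracking is geodesic.

The power `z` translates the same line `ℓ` by `k = (2m+1)n > 0`. For any `g`, the line `g • ℓ` is
again translated by `k` under `z`, because `z` is central. Two lines translated by the same amount
under `z` stay at bounded distance at both ends, so each edge of the one separates the ends of the
other, which hence crosses that edge in the same direction; so the lines agree up to a shift
(`exists_shift`). This says exactly that `g` acts on `ℓ` by a translation.

Trees enter through `dist_separate`, saying that a path between the two sides of an edge passes
through that edge, and through the fact that adjacent vertices have different distances to any
given vertex, so that every vertex lies on exactly one side of each edge.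
-/

/-- Generators: `0 ↦ a`, `1 ↦ b`. -/
def DihArt.a : FreeGroup (Fin 2) := FreeGroup.of 0
def DihArt.b : FreeGroup (Fin 2) := FreeGroup.of 1

/-- The dihedral Artin group `A_{I_{2m+1}} = ⟨a,b | (ab)^m a = b(ab)^m⟩`. -/
abbrev DihArt (m : ℕ) : Type :=
  PresentedGroup
    ({(DihArt.a * DihArt.b) ^ m * DihArt.a * (DihArt.b * (DihArt.a * DihArt.b) ^ m)⁻¹} :
      Set (FreeGroup (Fin 2)))

/-- The generator `a`. -/
def DihArt.genA (m : ℕ) : DihArt m := PresentedGroup.of 0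
/-- The generator `b`. -/
def DihArt.genB (m : ℕ) : DihArt m := PresentedGroup.of 1

namespace DihArt

open SimpleGraph

/-! ### Geodesic lines in a tree -/

section Tree

variable {V : Type*} {T : SimpleGraph V}

/-- If `u` lies on the `p`-side and `v` on the `q`-side of an edge `pq` of a tree, then the geodesic
from `u` to `v` runs through `pq`. -/
lemma dist_separate (hT : T.IsTree) {p q u v : V} (hpq : T.Adj p q)
    (hu : T.dist u p < T.dist u q) (hv : T.dist v q < T.dist v p) :
    T.dist u v = T.dist u p + 1 + T.dist q v := by
  classical
  have hc := hT.connected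
  obtain ⟨P, hP, hPl⟩ := hc.exists_path_of_dist u p
  obtain ⟨Q, hQ, hQl⟩ := hc.exists_path_of_dist q v
  obtain ⟨R, hR, hRl⟩ := hc.exists_path_of_dist u v
  have hPs : ∀ w ∈ P.support, T.dist w p < T.dist w q := by
    intro w hw
    have h1 := congrArg Walk.length (P.take_spec hw)
    rw [Walk.length_append] at h1
    have h2 := dist_le (P.takeUntil w hw)
    have h3 := dist_le (P.dropUntil w hw)
    have h4 := hc.dist_triangle (u := u) (v := w) (w := q)
    omega
  have hQs : ∀ w ∈ Q.support, T.dist w q < T.dist w p := by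
    intro w hw
    have h1 := congrArg Walk.length (Q.take_spec hw)
    rw [Walk.length_append] at h1
    have h2 := dist_le (Q.takeUntil w hw)
    have h3 := dist_le (Q.dropUntil w hw)
    have h4 := hc.dist_triangle (u := v) (v := w) (w := p)
    have h5 := T.dist_comm (u := v) (v := w)
    have h6 := T.dist_comm (u := q) (v := w)
    have h7 := T.dist_comm (u := q) (v := v)
    omega
  have hpath : (P.append (Walk.cons hpq Q)).IsPath := by
    rw [Walk.isPath_def, Walk.support_append, Walk.support_cons, List.tail_cons,
      List.nodup_append]
    refine ⟨hP.support_nodup, hQ.support_nodup, ?_⟩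
    rintro w hw _ hw' rfl
    exact absurd (hPs w hw) (hQs w hw').asymm
  have := (hT.isAcyclic.subsingleton_path u v).elim ⟨_, hpath⟩ ⟨R, hR⟩
  have h := congrArg Walk.length (congrArg Subtype.val this)
  simp only [Walk.length_append, Walk.length_cons] at h
  omega

/-- A bi-infinite sequence of vertices realising the distance between any two of its members. -/
def IsGeod (T : SimpleGraph V) (ℓ : ℤ → V) : Prop :=
  ∀ (i : ℤ) (n : ℕ), T.dist (ℓ i) (ℓ (i + n)) = n

lemma IsGeod.adj {ℓ : ℤ → V} (h : IsGeod T ℓ) (i : ℤ) : T.Adj (ℓ i) (ℓ (i + 1)) := by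
  have := h i 1
  simpa [dist_eq_one_iff_adj] using this

lemma IsGeod.injective {ℓ : ℤ → V} (h : IsGeod T ℓ) : Function.Injective ℓ := by
  have key : ∀ i j : ℤ, i ≤ j → ℓ i = ℓ j → i = j := by
    intro i j hij he
    have := h i (j - i).toNat
    rw [Int.toNat_of_nonneg (by omega), add_sub_cancel, he, dist_self] at this
    omega
  intro i j he
  rcases le_total i j with hij | hij
  · exact key i j hij he
  · exact (key j i hij he.symm).symm

/-- In a tree, sequences without backtracking are geodesic. -/
lemma isGeod_of_local (hT : T.IsTree) {ℓ : ℤ → V} (hadj : ∀ i, T.Adj (ℓ i) (ℓ (i + 1)))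
    (hne : ∀ i, ℓ i ≠ ℓ (i + 1 + 1)) : IsGeod T ℓ := by
  have hc := hT.connected
  have key : ∀ (i : ℤ) (n : ℕ), T.dist (ℓ i) (ℓ (i + n)) = n ∧
      T.dist (ℓ i) (ℓ (i + n + 1)) = n + 1 := by
    intro i n
    induction n with
    | zero => simpa [dist_eq_one_iff_adj] using hadj i
    | succ n ih =>
      obtain ⟨h1, h2⟩ := ih
      have e : i + ((n + 1 : ℕ) : ℤ) = i + n + 1 := by push_cast; ring
      rw [e]
      refine ⟨h2, ?_⟩
      have ha := hadj (i + n)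
      have hb := hadj (i + n + 1)
      have hd : T.dist (ℓ (i + n + 1 + 1)) (ℓ (i + n + 1)) = 1 :=
        dist_eq_one_iff_adj.2 hb.symm
      have hd0 := hc.pos_dist_of_ne (hne (i + n)).symm
      have hd1 := hT.dist_ne_of_adj (ℓ (i + n + 1 + 1)) ha
      -- `ℓ i` and `ℓ (i + n + 2)` are separated by the edge `ha`
      have := dist_separate hT (u := ℓ i) (v := ℓ (i + n + 1 + 1)) ha (by omega) (by omega)
      rw [this, h1, T.dist_comm, hd]
  exact fun i n => (key i n).1

/-- Two geodesic lines whose distance at corresponding parameters is `k`-periodic differ by a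
shift. -/
lemma exists_shift (hT : T.IsTree) {ℓ ℓ' : ℤ → V} (h : IsGeod T ℓ) (h' : IsGeod T ℓ')
    {k : ℕ} (hk : 0 < k)
    (hper : ∀ i, T.dist (ℓ (i + k)) (ℓ' (i + k)) = T.dist (ℓ i) (ℓ' i)) :
    ∃ t : ℤ, ∀ i, ℓ' i = ℓ (i + t) := by
  have hc := hT.connected
  have hpos : ∀ M : ℕ, T.dist (ℓ (k * M)) (ℓ' (k * M)) = T.dist (ℓ 0) (ℓ' 0) := by
    intro M
    induction M with
    | zero => simp
    | succ M ih =>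
      rw [← ih, ← hper (k * M)]
      push_cast
      rw [mul_add, mul_one]
  have hneg : ∀ M : ℕ, T.dist (ℓ (-(k * M))) (ℓ' (-(k * M))) = T.dist (ℓ 0) (ℓ' 0) := by
    intro M
    induction M with
    | zero => simp
    | succ M ih =>
      rw [← ih, ← hper (-(k * (M + 1 : ℕ)))]
      have e : -((k : ℤ) * (M + 1 : ℕ)) + k = -(k * M) := by push_cast; ring
      rw [e]
  have hd : ∀ i j : ℤ, i ≤ j → (T.dist (ℓ' i) (ℓ' j) : ℤ) = j - i := by
    intro i j hij
    have := h' i (j - i).toNat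
    rw [Int.toNat_of_nonneg (by omega), add_sub_cancel] at this
    omega
  have cross : ∀ i, ∃ j, ℓ j = ℓ' i ∧ ℓ (j + 1) = ℓ' (i + 1) := by
    intro i
    set D := T.dist (ℓ 0) (ℓ' 0) with hD
    -- at parameters `±k * M` both lines are far from the edge compared with `D`
    set M : ℕ := i.natAbs + D + 1 with hM
    have hkM : (M : ℤ) ≤ k * M := by
      have : (1 : ℤ) ≤ k := by exact_mod_cast hk
      nlinarith
    have hA := h'.adj i
    have hleft : T.dist (ℓ (-(k * M))) (ℓ' i) < T.dist (ℓ (-(k * M))) (ℓ' (i + 1)) := by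
      by_contra hcon
      have h1 := hT.dist_ne_of_adj (ℓ (-(k * M))) hA
      have e1 := hd (-(k * M)) i (by omega)
      have e2 := hd (-(k * M)) (i + 1) (by omega)
      have := dist_separate hT (u := ℓ' (-(k * M))) (v := ℓ (-(k * M))) hA (by omega) (by omega)
      rw [T.dist_comm, hneg M] at this
      omega
    have hright : ¬ T.dist (ℓ (k * M)) (ℓ' i) < T.dist (ℓ (k * M)) (ℓ' (i + 1)) := by
      intro hcon
      have e1 := hd i (k * M) (by omega)
      have e2 := hd (i + 1) (k * M) (by omega)
      rw [T.dist_comm] at e1 e2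
      have := dist_separate hT (u := ℓ (k * M)) (v := ℓ' (k * M)) hA hcon (by omega)
      rw [hpos M, T.dist_comm (u := ℓ' (i + 1))] at this
      omega
    obtain ⟨j, hj, hj'⟩ : ∃ j, T.dist (ℓ j) (ℓ' i) < T.dist (ℓ j) (ℓ' (i + 1)) ∧
        ¬ T.dist (ℓ (j + 1)) (ℓ' i) < T.dist (ℓ (j + 1)) (ℓ' (i + 1)) := by
      by_contra! hcon
      exact hright (Int.leInduction (m := -((k : ℤ) * M))
        (motive := fun j _ => T.dist (ℓ j) (ℓ' i) < T.dist (ℓ j) (ℓ' (i + 1)))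
        hleft (fun j _ hj => hcon j hj) (k * M) (by omega))
    have h1 := hT.dist_ne_of_adj (ℓ (j + 1)) hA
    have h2 := dist_separate hT (u := ℓ j) (v := ℓ (j + 1)) hA hj (by omega)
    have h3 : T.dist (ℓ j) (ℓ (j + 1)) = 1 := dist_eq_one_iff_adj.2 (h.adj j)
    exact ⟨j, hc.dist_eq_zero_iff.1 (by omega), (hc.dist_eq_zero_iff.1 (by omega)).symm⟩
  choose J hJ hJ' using cross
  have hstep : ∀ i, J (i + 1) = J i + 1 := fun i =>
    h.injective ((hJ (i + 1)).trans (hJ' i).symm)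
  have hlin : ∀ i : ℤ, J i = i + J 0 := by
    intro i
    induction i with
    | zero => simp
    | succ i ih => rw [hstep, ih]; ring
    | pred i ih =>
      have := hstep (-(i : ℤ) - 1)
      rw [sub_add_cancel, ih] at this
      omega
  exact ⟨J 0, fun i => by rw [← hlin, hJ]⟩

end Tree

/-! ### Axes of fixed-point-free elements -/

section Action

variable {V : Type*} {T : SimpleGraph V} {G : Type*} [Group G] [MulAction G V]

lemma dist_smul (hT : T.IsTree)
    (hact : ∀ (g : G) (u v : V), T.Adj u v → T.Adj (g • u) (g • v)) (g : G) (u v : V) :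
    T.dist (g • u) (g • v) = T.dist u v := by
  have key : ∀ (g : G) (u v : V), T.dist (g • u) (g • v) ≤ T.dist u v := by
    intro g u v
    obtain ⟨P, hP⟩ := hT.connected.exists_walk_length_eq_dist u v
    let f : T →g T := ⟨fun w => g • w, fun {a b} hab => hact g a b hab⟩
    have := dist_le (P.map f)
    rw [Walk.length_map, hP] at this
    exact this
  refine le_antisymm (key g u v) ?_
  simpa using key g⁻¹ (g • u) (g • v)

/-- An element acting without inversions and without fixed vertices has an axis. -/
lemma exists_axis (hT : T.IsTree)
    (hact : ∀ (g : G) (u v : V), T.Adj u v → T.Adj (g • u) (g • v))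
    (y : G) (hninv : ∀ u v : V, T.Adj u v → ¬(y • u = v ∧ y • v = u))
    (hfix : ∀ v : V, y • v ≠ v) :
    ∃ (ℓ : ℤ → V) (n : ℕ), 0 < n ∧ IsGeod T ℓ ∧ ∀ i, y • ℓ i = ℓ (i + n) := by
  have hc := hT.connected
  have : Nonempty V := hc.nonempty
  -- a vertex of minimal displacement
  obtain ⟨v, hv⟩ : ∃ v, ∀ w, T.dist v (y • v) ≤ T.dist w (y • w) :=
    ⟨Function.argmin (fun v => T.dist v (y • v)),
      fun w => Function.argmin_le (fun v => T.dist v (y • v)) w⟩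
  set n := T.dist v (y • v) with hn
  have hn0 : 0 < n := hc.pos_dist_of_ne (hfix v).symm
  obtain ⟨P, hP, hPl⟩ := hc.exists_path_of_dist v (y • v)
  rw [← hn] at hPl
  let ℓ : ℤ → V := fun j => y ^ (j / n) • P.getVert (j % n).toNat
  have hnz : (n : ℤ) ≠ 0 := by omega
  have hper : ∀ j, y • ℓ j = ℓ (j + n) := by
    intro j
    simp only [ℓ]
    rw [Int.add_ediv_of_dvd_right (dvd_refl _), Int.ediv_self hnz, Int.add_emod_right, smul_smul,
      add_comm, zpow_add, zpow_one]
  have hperz : ∀ k j : ℤ, ℓ (j + k * n) = y ^ k • ℓ j := by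
    intro k j
    simp only [ℓ]
    rw [Int.add_mul_ediv_right _ _ hnz, Int.add_mul_emod_self_right, smul_smul, ← zpow_add,
      add_comm]
  -- the formula also holds for `i = n`, since both translates of the segment meet at `y • v`
  have hseg : ∀ i : ℕ, i ≤ n → ℓ i = P.getVert i := by
    intro i hi
    rcases hi.lt_or_eq with hlt | rfl
    · simp only [ℓ]
      rw [Int.ediv_eq_zero_of_lt (by omega) (by omega), Int.emod_eq_of_lt (by omega) (by omega)]
      simp
    · rw [← hPl, Walk.getVert_length, hPl]
      simp [ℓ, Int.ediv_self hnz]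
  have hred : ∀ j : ℤ, ∃ (k : ℤ) (i : ℕ), i < n ∧ j = i + k * n := fun j =>
    ⟨j / n, (j % n).toNat, by have := Int.emod_lt_of_pos j (b := n) (by omega); omega, by
      rw [Int.toNat_of_nonneg (Int.emod_nonneg _ hnz), Int.emod_add_ediv_mul]⟩
  have hadj0 : ∀ i : ℕ, i < n → T.Adj (ℓ i) (ℓ (i + 1)) := by
    intro i hi
    have h1 := hseg (i + 1) hi
    push_cast at h1
    rw [hseg i hi.le, h1]
    exact P.adj_getVert_succ (by omega)
  refine ⟨ℓ, n, hn0, isGeod_of_local hT ?_ ?_, hper⟩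
  · intro j
    obtain ⟨k, i, hi, rfl⟩ := hred j
    rw [add_right_comm, hperz, hperz]
    exact hact _ _ _ (hadj0 i hi)
  · intro j hj
    obtain ⟨k, i, hi, rfl⟩ := hred j
    have e : (i : ℤ) + k * n + 1 + 1 = i + 1 + 1 + k * n := by ring
    rw [e, hperz, hperz] at hj
    have hj := MulAction.injective _ hj
    rcases Nat.lt_or_ge (i + 1) n with hlt | hge
    · have h2 := hseg (i + 2) hlt
      push_cast at h2
      rw [add_assoc, one_add_one_eq_two, h2, hseg i hi.le] at hj
      have := hP.getVert_injOn (by simp; omega) (by simp; omega) hj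
      omega
    · have hin : i + 1 = n := by omega
      -- backtracking at `y • v`: here `ℓ i = y • ℓ 1`
      have h1 : y • ℓ 1 = ℓ i := by
        rw [hper, hj, ← hin]; congr 1; push_cast; ring
      rcases Nat.eq_zero_or_pos i with rfl | hpos
      · have h0 := hper 0
        have ha := hadj0 0 (by omega)
        simp only [← hin, Nat.cast_zero, zero_add, Nat.cast_one] at h0 h1 ha
        -- for `n = 1`, the element `y` swaps `ℓ 0` and `ℓ 1`
        exact hninv _ _ ha ⟨h0, h1⟩
      · have hmin := hv (ℓ 1)
        rw [h1] at hmin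
        -- for `n ≥ 2`, the vertex `ℓ 1` has displacement at most `n - 2`
        have hle : ∀ k : ℕ, k + 1 ≤ i → T.dist (ℓ 1) (ℓ (k + 1 : ℕ)) ≤ k := by
          intro k
          induction k with
          | zero => simp
          | succ k ih =>
            intro hk
            have t1 := ih (by omega)
            have t2 := dist_eq_one_iff_adj.2 (hadj0 (k + 1) (by omega))
            have t3 := hc.dist_triangle (u := ℓ 1) (v := ℓ (k + 1 : ℕ)) (w := ℓ (k + 1 + 1 : ℕ))
            push_cast at *
            omega
        have := hle (i - 1) (by omega)
        rw [Nat.sub_add_cancel hpos] at this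
        omega

end Action

/-! ### The centre of the group -/

/-- The element `(ab)^(2m+1) = ((ab)^m a)²` is central: it commutes with `ab` and with `(ab)^m a`,
which generate the group. -/
lemma central_pow (m : ℕ) (g : DihArt m) :
    Commute g ((genA m * genB m) ^ (2 * m + 1)) := by
  set a := genA m with ha
  set b := genB m with hb
  have hrel : (a * b) ^ m * a = b * (a * b) ^ m := by
    have := PresentedGroup.one_of_mem (rels := {(DihArt.a * DihArt.b) ^ m * DihArt.a *
      (DihArt.b * (DihArt.a * DihArt.b) ^ m)⁻¹}) (Set.mem_singleton _)
    rw [map_mul, map_inv, mul_inv_eq_one, map_mul, map_mul, map_pow, map_mul] at this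
    exact this
  have hsq : (a * b) ^ (2 * m + 1) = ((a * b) ^ m * a) ^ 2 := by
    calc (a * b) ^ (2 * m + 1) = (a * b) ^ m * (a * b) * (a * b) ^ m := by
          rw [← pow_succ, ← pow_add]; congr 1; ring
      _ = (a * b) ^ m * a * (b * (a * b) ^ m) := by simp only [mul_assoc]
      _ = ((a * b) ^ m * a) ^ 2 := by rw [← hrel, pow_two]
  set z := (a * b) ^ (2 * m + 1) with hz
  have hy : Commute (a * b) z := Commute.self_pow _ _
  have hx : Commute ((a * b) ^ m * a) z := hsq ▸ Commute.self_pow _ _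
  have hA : Commute a z := by
    have := (hy.pow_left m).inv_left.mul_left hx
    rwa [inv_mul_cancel_left] at this
  have hB : Commute b z := by
    have := hA.inv_left.mul_left hy
    rwa [inv_mul_cancel_left] at this
  induction g using PresentedGroup.induction_on with
  | _ w =>
    induction w using FreeGroup.induction_on with
    | C1 => rw [map_one]; exact Commute.one_left _
    | of i => fin_cases i; exacts [hA, hB]
    | inv_of i h => rw [map_inv]; exact h.inv_left
    | mul x y hx hy => rw [map_mul]; exact hx.mul_left hy

end DihArt

/-- Let `m ≥ 1` and let the dihedral Artin group
`A = ⟨a,b | (ab)^m a = b(ab)^m⟩` act without inversions on a tree `T` so that the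
element `ab` fixes no vertex. Then there is a geodesic line in `T` whose image is
`A`-invariant and on which `A` acts by translations. -/
theorem dihArt_translation_line (m : ℕ) (hm : 1 ≤ m)
    (V : Type) (T : SimpleGraph V) (hT : T.IsTree)
    [MulAction (DihArt m) V]
    (hact : ∀ (g : DihArt m) (u v : V), T.Adj u v → T.Adj (g • u) (g • v))
    (hninv : ∀ (g : DihArt m) (u v : V), T.Adj u v → ¬(g • u = v ∧ g • v = u))
    (hab : ∀ v : V, (DihArt.genA m * DihArt.genB m) • v ≠ v) :
    ∃ ℓ : ℤ → V, Function.Injective ℓ ∧ (∀ i : ℤ, T.Adj (ℓ i) (ℓ (i + 1))) ∧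
      ∀ g : DihArt m, ∃ t : ℤ, ∀ i : ℤ, g • ℓ i = ℓ (i + t) := by
  obtain ⟨ℓ, n, hn, hgeo, hy⟩ := DihArt.exists_axis hT hact (DihArt.genA m * DihArt.genB m)
    (hninv _) hab
  refine ⟨ℓ, hgeo.injective, hgeo.adj, fun g => ?_⟩
  have hpow : ∀ (N : ℕ) (i : ℤ),
      (DihArt.genA m * DihArt.genB m) ^ N • ℓ i = ℓ (i + (N * n : ℕ)) := by
    intro N
    induction N with
    | zero => simp
    | succ N ih =>
      intro i
      rw [pow_succ', mul_smul, ih, hy]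
      congr 1
      push_cast
      ring
  have hz := hpow (2 * m + 1)
  refine DihArt.exists_shift hT (ℓ' := fun i => g • ℓ i) hgeo
    (fun i k => (DihArt.dist_smul hT hact g _ _).trans (hgeo i k))
    (k := (2 * m + 1) * n) (by positivity) fun i => ?_
  rw [← hz, ← mul_smul, (DihArt.central_pow m g).eq, mul_smul, DihArt.dist_smul hT hact]
end

section
/- Let n, m ≥ 1 and let G = Art_{2,2n+1,2m+1} = ⟨a,b,c | ac=ca, (bc)^n b = c(bc)^n, (ab)^m a = b(ab)^m⟩. Suppose G acts without inversions on a tree T and the generator a fixes some vertex. Then there is a vertex of T fixed by every element of G. -/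
/-!
The generators `a`, `b`, `c` are conjugate to each other because both long relations have odd
length, so all three fix vertices. Helly's theorem for subtrees then reduces the problem to showing
that the fixed subtrees of any two generators meet.

For this, let `x`, `y` fix vertices and suppose `x` commutes with some `(xy)^k`, `k ≥ 1`. If their
fixed subtrees were disjoint, a ping-pong argument on the geodesic bridging them would show that
`(xy)^k` moves a vertex `p` fixed by `x` into a half-tree that is disjoint from its preimage
under `x`. But `(xy)^k • p` is fixed by `x`, a contradiction (`exists_common_fixed`). The hypothesis
holds for `a, c` with `k = 1`, and for an odd dihedral pair
`(xy)^m x = y (xy)^m` with `k = 2m+1`, as `(xy)^(2m+1)` is the square of the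
Garside element `(xy)^m x`, hence central in `⟨x, y⟩`.

Half-trees are handled metrically: the side of an edge `p p₁` containing `p₁` is the set of `v`
with `dist v p₁ < dist v p`.
-/

/-- Generators: `0 ↦ a`, `1 ↦ b`, `2 ↦ c`. -/
def ArtOdd.a : FreeGroup (Fin 3) := FreeGroup.of 0
def ArtOdd.b : FreeGroup (Fin 3) := FreeGroup.of 1
def ArtOdd.c : FreeGroup (Fin 3) := FreeGroup.of 2

/-- Relators of `Art_{2,2n+1,2m+1} = ⟨a,b,c | ac=ca, (bc)^n b = c(bc)^n, (ab)^m a = b(ab)^m⟩`. -/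
def ArtOdd.rels (n m : ℕ) : Set (FreeGroup (Fin 3)) :=
  { ArtOdd.a * ArtOdd.c * (ArtOdd.c * ArtOdd.a)⁻¹,
    (ArtOdd.b * ArtOdd.c) ^ n * ArtOdd.b * (ArtOdd.c * (ArtOdd.b * ArtOdd.c) ^ n)⁻¹,
    (ArtOdd.a * ArtOdd.b) ^ m * ArtOdd.a * (ArtOdd.b * (ArtOdd.a * ArtOdd.b) ^ m)⁻¹ }

/-- The triangle Artin group `Art_{2,2n+1,2m+1}`. -/
abbrev ArtOdd (n m : ℕ) : Type := PresentedGroup (ArtOdd.rels n m)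

/-- The generator `a`. -/
def ArtOdd.gA (n m : ℕ) : ArtOdd n m := PresentedGroup.of 0
/-- The generator `b`. -/
def ArtOdd.gB (n m : ℕ) : ArtOdd n m := PresentedGroup.of 1
/-- The generator `c`. -/
def ArtOdd.gC (n m : ℕ) : ArtOdd n m := PresentedGroup.of 2

namespace ArtOddAux

variable {V : Type*} {T : SimpleGraph V}

/-- In a tree, a vertex has at most one neighbour closer to a given vertex `v`. -/
lemma closer_unique (hT : T.IsTree) {v x y y' : V} (h : T.Adj x y) (h' : T.Adj x y')
    (hy : T.dist v y < T.dist v x) (hy' : T.dist v y' < T.dist v x) : y = y' := by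
  have key : ∀ z, T.Adj x z → T.dist v z < T.dist v x →
      ∃ (hz : T.Adj x z) (p : T.Walk z v), (SimpleGraph.Walk.cons hz p).IsPath := by
    intro z hz hlt
    obtain ⟨p, hp⟩ := hT.connected.exists_walk_length_eq_dist z v
    refine ⟨hz, p, SimpleGraph.Walk.isPath_of_length_eq_dist _ ?_⟩
    have := hT.dist_eq_dist_add_one_of_adj v hz
    rw [SimpleGraph.Walk.length_cons, hp, T.dist_comm, T.dist_comm (u := x)]
    omega
  obtain ⟨h1, p, hp⟩ := key y h hy
  obtain ⟨h2, p', hp'⟩ := key y' h' hy'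
  have := (hT.existsUnique_path x v).unique hp hp'
  injection this

lemma exists_closer (hT : T.IsTree) {v x : V} (h : x ≠ v) :
    ∃ y, T.Adj x y ∧ T.dist v y < T.dist v x := by
  obtain ⟨p, hp⟩ := hT.connected.exists_walk_length_eq_dist x v
  cases p with
  | nil => exact absurd rfl h
  | cons hxy q =>
    refine ⟨_, hxy, ?_⟩
    have := T.dist_le q
    rw [SimpleGraph.Walk.length_cons] at hp
    rw [T.dist_comm, T.dist_comm (u := v)]
    omega

/-- If the edge `x₀ x₁` separates `v` from `z`, then the geodesic from `v` to `z` crosses it. -/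
lemma dist_across (hT : T.IsTree) {v z x₀ x₁ : V} (h : T.Adj x₀ x₁)
    (hv : T.dist v x₀ < T.dist v x₁) (hz : T.dist z x₁ < T.dist z x₀) :
    T.dist v z = T.dist v x₁ + T.dist z x₁ := by
  induction hk : T.dist z x₁ generalizing x₀ x₁ with
  | zero =>
    obtain rfl := hT.connected.dist_eq_zero_iff.1 hk
    rfl
  | succ k ih =>
    have hne : x₁ ≠ z := by
      rintro rfl
      simp at hk
    obtain ⟨x₂, h12, hlt⟩ := exists_closer hT hne
    have hx : x₀ ≠ x₂ := by
      rintro rfl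
      omega
    have hv2 : T.dist v x₁ < T.dist v x₂ := by
      by_contra hcon
      have := hT.dist_ne_of_adj v h12
      exact hx (closer_unique hT h.symm h12 hv (by omega))
    have e1 := hT.dist_eq_dist_add_one_of_adj z h12
    have e2 := hT.dist_eq_dist_add_one_of_adj v h12
    have := ih h12 hv2 hlt (by omega)
    omega

section Action

variable {G : Type*} [Group G] [MulAction G V]

lemma dist_smul (hT : T.IsTree) (hact : ∀ (g : G) (u v : V), T.Adj u v → T.Adj (g • u) (g • v))
    (g : G) (u v : V) : T.dist (g • u) (g • v) = T.dist u v := by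
  have le : ∀ (g : G) (u v : V), T.dist (g • u) (g • v) ≤ T.dist u v := by
    intro g u v
    obtain ⟨p, hp⟩ := hT.connected.exists_walk_length_eq_dist u v
    let f : T →g T := ⟨fun x => g • x, fun {a b} h => hact g a b h⟩
    have := T.dist_le (p.map f)
    rw [SimpleGraph.Walk.length_map, hp] at this
    exact this
  refine le_antisymm (le g u v) ?_
  simpa using le g⁻¹ (g • u) (g • v)

/-- The first step of the geodesic from `u` to `v` is fixed by any `g` fixing `u` and `v`. -/
lemma fix_closer (hT : T.IsTree)
    (hact : ∀ (g : G) (u v : V), T.Adj u v → T.Adj (g • u) (g • v))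
    {g : G} {u v u₁ : V} (hu : g • u = u) (hv : g • v = v) (h : T.Adj u u₁)
    (hlt : T.dist v u₁ < T.dist v u) : g • u₁ = u₁ := by
  refine closer_unique hT (v := v) (x := u) ?_ h ?_ hlt
  · simpa [hu] using hact g u u₁ h
  · rwa [← dist_smul hT hact g v u₁, hv] at hlt

lemma fix_between (hT : T.IsTree)
    (hact : ∀ (g : G) (u v : V), T.Adj u v → T.Adj (g • u) (g • v))
    {g : G} {y z x : V} (hy : g • y = y) (hz : g • z = z)
    (h : T.dist y z = T.dist y x + T.dist x z) : g • x = x := by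
  induction hk : T.dist y x generalizing y with
  | zero =>
    obtain rfl := hT.connected.dist_eq_zero_iff.1 hk
    exact hy
  | succ k ih =>
    have hne : y ≠ x := by
      rintro rfl
      simp at hk
    obtain ⟨y', hadj, hlt⟩ := exists_closer hT hne
    have e := hT.dist_eq_dist_add_one_of_adj x hadj
    have e' := hT.dist_eq_dist_add_one_of_adj z hadj
    have tri := hT.connected.dist_triangle (u := y') (v := x) (w := z)
    rw [T.dist_comm (u := x) (v := y), T.dist_comm (u := x) (v := y')] at e hlt
    rw [T.dist_comm (u := z) (v := y), T.dist_comm (u := z) (v := y')] at e'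
    refine ih (fix_closer hT hact hy hz hadj ?_) ?_ (by omega)
    · rw [T.dist_comm, T.dist_comm (u := z)]
      omega
    · omega

/-- The Helly property for the fixed subtrees of three elements. -/
lemma helly (hT : T.IsTree)
    (hact : ∀ (g : G) (u v : V), T.Adj u v → T.Adj (g • u) (g • v))
    {a b c : G} {x y z : V} (hax : a • x = x) (hbx : b • x = x) (hby : b • y = y)
    (hcy : c • y = y) (haz : a • z = z) (hcz : c • z = z) :
    ∃ v : V, a • v = v ∧ b • v = v ∧ c • v = v := by
  induction hk : T.dist y x using Nat.strong_induction_on generalizing x with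
  | _ k ih =>
    by_cases hxy : x = y
    · exact ⟨x, hax, hbx, hxy ▸ hcy⟩
    by_cases hxz : x = z
    · exact ⟨x, hax, hbx, hxz ▸ hcz⟩
    obtain ⟨y₁, hy₁, hylt⟩ := exists_closer hT hxy
    obtain ⟨z₁, hz₁, hzlt⟩ := exists_closer hT hxz
    by_cases he : y₁ = z₁
    · subst he
      exact ih _ (by omega) (fix_closer hT hact hax haz hy₁ hzlt)
        (fix_closer hT hact hbx hby hy₁ hylt) rfl
    -- If the two geodesics leave `x` in different directions, then `x` lies between `y` and `z`.
    · refine ⟨x, hax, hbx, fix_between hT hact hcy hcz ?_⟩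
      rw [T.dist_comm (u := x) (v := z)]
      refine dist_across hT hy₁.symm hylt ?_
      by_contra hcon
      have := hT.dist_ne_of_adj z hy₁
      exact he (closer_unique hT hy₁ hz₁ (by omega) hzlt)

/-- Ping-pong: two elements with fixed vertices have a common one as soon as the first commutes with
a positive power of their product. -/
lemma exists_common_fixed (hT : T.IsTree)
    (hact : ∀ (g : G) (u v : V), T.Adj u v → T.Adj (g • u) (g • v))
    {a b : G} (ha : ∃ v : V, a • v = v) (hb : ∃ v : V, b • v = v) (k : ℕ)
    (hcomm : a * (a * b) ^ (k + 1) = (a * b) ^ (k + 1) * a) :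
    ∃ v : V, a • v = v ∧ b • v = v := by
  classical
  have hex : ∃ d, ∃ p q : V, a • p = p ∧ b • q = q ∧ T.dist p q = d := by
    obtain ⟨p, hp⟩ := ha
    obtain ⟨q, hq⟩ := hb
    exact ⟨_, p, q, hp, hq, rfl⟩
  obtain ⟨p, q, hp, hq, hd⟩ := Nat.find_spec hex
  have hmin : ∀ p' q' : V, a • p' = p' → b • q' = q' → T.dist p q ≤ T.dist p' q' := by
    intro p' q' hp' hq'
    rw [hd]
    exact Nat.find_min' hex ⟨p', q', hp', hq', rfl⟩
  clear hd
  by_cases hpq : p = q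
  · exact ⟨p, hp, hpq ▸ hq⟩
  exfalso
  obtain ⟨p₁, hpp, hplt⟩ := exists_closer hT hpq
  obtain ⟨q₁, hqq, hqlt⟩ := exists_closer hT (Ne.symm hpq)
  have hap : a • p₁ ≠ p₁ := by
    intro h
    have := hmin p₁ q h hq
    rw [T.dist_comm, T.dist_comm (u := p₁)] at this
    omega
  have hbq : b • q₁ ≠ q₁ := by
    intro h
    have := hmin p q₁ hp h
    omega
  -- The half-trees beyond `p` and beyond `q` are disjoint: a vertex beyond `p` is nearer to `q₁`.
  have hWY : ∀ v, ¬ T.dist v p₁ < T.dist v p → T.dist v q₁ < T.dist v q := by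
    intro v hv
    have h0 := hT.dist_ne_of_adj v hpp
    have h1 := dist_across hT hpp (v := v) (z := q) (by omega) hplt
    have h2 := hT.connected.dist_triangle (u := v) (v := p) (w := q₁)
    have h3 := hT.dist_eq_dist_add_one_of_adj v hpp
    have h4 := hT.dist_eq_dist_add_one_of_adj q hpp
    rw [T.dist_comm (u := q) (v := p)] at h4
    omega
  have haW : ∀ w, T.dist w p₁ < T.dist w p →
      T.dist (a • w) (a • p₁) < T.dist (a • w) p := by
    intro w hw
    rwa [← dist_smul hT hact a w p₁, ← dist_smul hT hact a w p, hp] at hw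
  have hadj : T.Adj p (a • p₁) := by simpa [hp] using hact a p p₁ hpp
  have haW' : ∀ w, T.dist w p₁ < T.dist w p → ¬ T.dist (a • w) p₁ < T.dist (a • w) p :=
    fun w hw h => hap (closer_unique hT hadj hpp (haW w hw) h)
  have hbY : ∀ v, T.dist v q₁ < T.dist v q → T.dist (b • v) p₁ < T.dist (b • v) p := by
    intro v hv
    by_contra hcon
    refine hbq (closer_unique hT (v := b • v) (x := q) ?_ hqq ?_ (hWY _ hcon))
    · simpa [hq] using hact b q q₁ hqq
    · rwa [← dist_smul hT hact b v q₁, ← dist_smul hT hact b v q, hq] at hv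
  have hpow : ∀ j : ℕ, T.dist ((a * b) ^ j • p) q₁ < T.dist ((a * b) ^ j • p) q := by
    intro j
    induction j with
    | zero => simpa using hqlt
    | succ j ih =>
      rw [pow_succ', mul_smul, mul_smul]
      exact hWY _ (haW' _ (hbY _ ih))
  have hfix : a • (a * b) ^ (k + 1) • p = (a * b) ^ (k + 1) • p := by
    rw [← mul_smul, hcomm, mul_smul, hp]
  have hw := hbY _ (hpow k)
  have heq : (a * b) ^ (k + 1) • p = a • b • (a * b) ^ k • p := by
    rw [pow_succ', mul_smul, mul_smul]
  rw [heq] at hfix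
  have hfix' := smul_left_cancel a hfix
  have := haW' _ hw
  rw [hfix'] at this
  exact this hw

lemma fixed_of_conj {a b g : G} (h : g * a = b * g) (ha : ∃ v : V, a • v = v) :
    ∃ v : V, b • v = v := by
  obtain ⟨v, hv⟩ := ha
  exact ⟨g • v, by rw [← mul_smul, ← h, mul_smul, hv]⟩

/-- The square `(ab)^(2m+1)` of the Garside element `(ab)^m a` of an odd dihedral Artin group
commutes with `a`. -/
lemma comm_of_odd {a b : G} {m : ℕ} (h : (a * b) ^ m * a = b * (a * b) ^ m) :
    a * (a * b) ^ (2 * m + 1) = (a * b) ^ (2 * m + 1) * a := by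
  have e : (a * b) ^ (2 * m + 1) = ((a * b) ^ m * a) * (b * (a * b) ^ m) := by
    rw [two_mul, add_assoc, pow_add, pow_succ']
    simp only [mul_assoc]
  have e1 : a * ((a * b) ^ m * a) = ((a * b) ^ m * a) * b := by
    rw [h, ← mul_assoc, ← pow_succ', pow_succ, ← mul_assoc, h]
  have e2 : b * ((a * b) ^ m * a) = ((a * b) ^ m * a) * a := by
    nth_rw 2 [h]
    simp only [mul_assoc]
  rw [e, ← h, ← mul_assoc a, e1, mul_assoc _ b, e2, ← mul_assoc]

end Action

lemma rel_ac (n m : ℕ) : ArtOdd.gA n m * ArtOdd.gC n m = ArtOdd.gC n m * ArtOdd.gA n m := by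
  have h := PresentedGroup.one_of_mem (rels := ArtOdd.rels n m) (Or.inl rfl)
  rw [map_mul, map_inv, mul_inv_eq_one] at h
  simp only [map_mul] at h
  exact h

lemma rel_bc (n m : ℕ) : (ArtOdd.gB n m * ArtOdd.gC n m) ^ n * ArtOdd.gB n m
    = ArtOdd.gC n m * (ArtOdd.gB n m * ArtOdd.gC n m) ^ n := by
  have h := PresentedGroup.one_of_mem (rels := ArtOdd.rels n m) (Or.inr (Or.inl rfl))
  rw [map_mul, map_inv, mul_inv_eq_one] at h
  simp only [map_mul, map_pow] at h
  exact h

lemma rel_ab (n m : ℕ) : (ArtOdd.gA n m * ArtOdd.gB n m) ^ m * ArtOdd.gA n m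
    = ArtOdd.gB n m * (ArtOdd.gA n m * ArtOdd.gB n m) ^ m := by
  have h := PresentedGroup.one_of_mem (rels := ArtOdd.rels n m) (Or.inr (Or.inr rfl))
  rw [map_mul, map_inv, mul_inv_eq_one] at h
  simp only [map_mul, map_pow] at h
  exact h

end ArtOddAux

/-- Let `n, m ≥ 1` and suppose `G = Art_{2,2n+1,2m+1}` acts without
inversions on a tree `T` so that the generator `a` fixes some vertex. Then some vertex
of `T` is fixed by every element of `G`. -/
theorem artOdd_global_fixed_point (n m : ℕ) (hn : 1 ≤ n) (hm : 1 ≤ m)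
    (V : Type) (T : SimpleGraph V) (hT : T.IsTree)
    [MulAction (ArtOdd n m) V]
    (hact : ∀ (g : ArtOdd n m) (u v : V), T.Adj u v → T.Adj (g • u) (g • v))
    (hninv : ∀ (g : ArtOdd n m) (u v : V), T.Adj u v → ¬(g • u = v ∧ g • v = u))
    (ha : ∃ v : V, ArtOdd.gA n m • v = v) :
    ∃ v : V, ∀ g : ArtOdd n m, g • v = v := by
  have hb := ArtOddAux.fixed_of_conj (ArtOddAux.rel_ab n m) ha
  have hc := ArtOddAux.fixed_of_conj (ArtOddAux.rel_bc n m) hb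
  obtain ⟨x, hax, hbx⟩ := ArtOddAux.exists_common_fixed hT hact ha hb (2 * m)
    (ArtOddAux.comm_of_odd (ArtOddAux.rel_ab n m))
  obtain ⟨y, hby, hcy⟩ := ArtOddAux.exists_common_fixed hT hact hb hc (2 * n)
    (ArtOddAux.comm_of_odd (ArtOddAux.rel_bc n m))
  obtain ⟨z, haz, hcz⟩ := ArtOddAux.exists_common_fixed hT hact ha hc 0
    (by rw [zero_add, pow_one, mul_assoc, ← ArtOddAux.rel_ac])
  obtain ⟨v, hav, hbv, hcv⟩ := ArtOddAux.helly hT hact hax hbx hby hcy haz hcz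
  refine ⟨v, fun g => ?_⟩
  have hle : Subgroup.closure (Set.range (PresentedGroup.of (rels := ArtOdd.rels n m)))
      ≤ MulAction.stabilizer (ArtOdd n m) v := by
    rw [Subgroup.closure_le]
    rintro _ ⟨i, rfl⟩
    fin_cases i
    · exact hav
    · exact hbv
    · exact hcv
  rw [PresentedGroup.closure_range_of] at hle
  exact hle (Subgroup.mem_top g)
end
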